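/- arXiv:2503.12756 — 7 statements merged into one kernel-verified Lean document; each statement's English description precedes it below -/
import Mathlib

section
/- Let ℓ be a prime number, let A and B be abelian groups with A ℓ-divisible, and let φ : A → B be a surjective group homomorphism whose kernel H is finite. Then the ℓ-primary component H[ℓ^∞] of H is isomorphic, as an abelian group, to the cokernel of the induced map T_ℓφ : T_ℓA → T_ℓB on ℓ-adic Tate modules. -/
/-- The ℓ-adic Tate module of an abelian group `A`. An element is a sequence `P` with
`P n ∈ A[ℓ^(n+1)]` (so `P 0` plays the role of `P₁ ∈ A[ℓ]`) and `ℓ • P (n+1) = P n`. -/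
def TateModule (ℓ : ℕ) (A : Type*) [AddCommGroup A] : AddSubgroup (ℕ → A) where
  carrier := {P | (∀ n, ℓ ^ (n + 1) • P n = 0) ∧ ∀ n, ℓ • P (n + 1) = P n}
  zero_mem' := ⟨fun _ => smul_zero _, fun _ => smul_zero _⟩
  add_mem' := by
    rintro P Q ⟨hP1, hP2⟩ ⟨hQ1, hQ2⟩
    refine ⟨fun n => ?_, fun n => ?_⟩
    · show ℓ ^ (n + 1) • (P n + Q n) = 0
      rw [smul_add, hP1 n, hQ1 n, add_zero]
    · show ℓ • (P (n + 1) + Q (n + 1)) = P n + Q n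
      rw [smul_add, hP2 n, hQ2 n]
  neg_mem' := by
    rintro P ⟨hP1, hP2⟩
    refine ⟨fun n => ?_, fun n => ?_⟩
    · show ℓ ^ (n + 1) • (-(P n)) = 0
      rw [smul_neg, hP1 n, neg_zero]
    · show ℓ • (-(P (n + 1))) = -(P n)
      rw [smul_neg, hP2 n]

/-- The map induced on `ℓ`-adic Tate modules by a homomorphism of abelian groups,
given by applying it componentwise. -/
def tateMap (ℓ : ℕ) {A B : Type*} [AddCommGroup A] [AddCommGroup B] (φ : A →+ B) :
    TateModule ℓ A →+ TateModule ℓ B where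
  toFun P := ⟨fun n => φ (P.1 n),
    fun n => by rw [← map_nsmul, P.2.1 n, map_zero],
    fun n => by rw [← map_nsmul, P.2.2 n]⟩
  map_zero' := Subtype.ext (funext fun _ => map_zero φ)
  map_add' P Q := Subtype.ext (funext fun _ => map_add φ _ _)

/-- The `ℓ`-primary component of an abelian group: elements killed by a power of `ℓ`. -/
def primaryPart (ℓ : ℕ) (H : Type*) [AddCommGroup H] : AddSubgroup H where
  carrier := {h | ∃ k : ℕ, ℓ ^ k • h = 0}
  zero_mem' := ⟨0, smul_zero _⟩
  add_mem' := by
    rintro a b ⟨j, hj⟩ ⟨k, hk⟩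
    refine ⟨j + k, ?_⟩
    have ha : ℓ ^ (j + k) • a = 0 := by
      rw [pow_add, mul_comm, mul_smul, hj, smul_zero]
    have hb : ℓ ^ (j + k) • b = 0 := by
      rw [pow_add, mul_smul, hk, smul_zero]
    rw [smul_add, ha, hb, add_zero]
  neg_mem' := by
    rintro a ⟨k, hk⟩
    exact ⟨k, by rw [smul_neg, hk, neg_zero]⟩

/-- Let `ℓ` be a prime, `A`, `B` abelian groups with `A` `ℓ`-divisible, and
`φ : A → B` a surjective homomorphism with finite kernel `H`. Then the `ℓ`-primary component
`H[ℓ^∞]` of `H` is isomorphic to the cokernel of `T_ℓφ : T_ℓA → T_ℓB`. -/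
theorem primaryPart_ker_isomorphic_coker_tateMap
    (ℓ : ℕ) (hℓ : ℓ.Prime) (A B : Type*) [AddCommGroup A] [AddCommGroup B]
    (hdiv : ∀ a : A, ∃ b : A, ℓ • b = a)
    (φ : A →+ B) (hsurj : Function.Surjective φ) (hker : Finite φ.ker) :
    Nonempty ((primaryPart ℓ φ.ker) ≃+
      (TateModule ℓ B ⧸ (tateMap ℓ φ).range)) := by
  classical
  obtain ⟨N, m, hm, hcard⟩ :=
    Nat.exists_eq_pow_mul_and_not_dvd (n := Nat.card φ.ker) Nat.card_pos.ne' ℓ hℓ.ne_one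
  have hcop : ∀ k : ℕ, ∃ u v : ℤ, u * (m : ℤ) + v * ((ℓ ^ k : ℕ) : ℤ) = 1 := fun k =>
    Nat.isCoprime_iff_coprime.2 (((Nat.Prime.coprime_iff_not_dvd hℓ).2 hm).symm.pow_right k)
  -- the order of the kernel kills it
  have hkill : ∀ x : A, φ x = 0 → ℓ ^ N • m • x = 0 := by
    intro x hx
    have h := card_nsmul_eq_zero' (x := (⟨x, hx⟩ : φ.ker))
    rw [hcard] at h
    have h2 := congrArg Subtype.val h
    rw [← mul_smul]
    simpa using h2
  -- a section-like map `B → A`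
  obtain ⟨ψ, hψ⟩ : ∃ ψ : B →+ A, ∀ a, ψ (φ a) = ℓ ^ (N + 1) • m • a := by
    have hw : ∀ x y : A, φ x = φ y → ℓ ^ (N + 1) • m • x = ℓ ^ (N + 1) • m • y := by
      intro x y hxy
      have h := hkill (x - y) (by rw [map_sub, hxy, sub_self])
      rw [← sub_eq_zero, ← smul_sub, ← smul_sub, pow_succ', mul_smul, h, smul_zero]
    choose s hs using hsurj
    refine ⟨AddMonoidHom.mk' (fun b => ℓ ^ (N + 1) • m • s b) ?_, fun a => hw _ _ (hs _)⟩
    intro a b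
    show ℓ ^ (N + 1) • m • s (a + b) = ℓ ^ (N + 1) • m • s a + ℓ ^ (N + 1) • m • s b
    rw [← smul_add, ← smul_add]
    exact hw _ _ (by rw [map_add, hs, hs, hs])
  have hφψ : ∀ b, φ (ψ b) = m • ℓ ^ (N + 1) • b := by
    intro b
    obtain ⟨a, rfl⟩ := hsurj b
    rw [hψ, map_nsmul, map_nsmul, smul_comm]
  have hmem : ∀ P : TateModule ℓ B, φ (ψ (P.1 N)) = 0 := fun P => by
    rw [hφψ, P.2.1 N, smul_zero]
  have hprim : ∀ P : TateModule ℓ B, ℓ ^ N • ψ (P.1 N) = 0 := by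
    intro P
    obtain ⟨a, ha⟩ := hsurj (P.1 N)
    rw [← ha, hψ, smul_comm (ℓ ^ (N + 1)) m]
    apply hkill
    rw [map_nsmul, ha, P.2.1 N]
  let δ : TateModule ℓ B →+ primaryPart ℓ φ.ker := AddMonoidHom.mk'
    (fun P => ⟨⟨ψ (P.1 N), hmem P⟩, N, Subtype.ext (hprim P)⟩)
    (fun P Q => Subtype.ext (Subtype.ext (map_add ψ (P.1 N) (Q.1 N))))
  have hδ : ∀ P, ((δ P : φ.ker) : A) = ψ (P.1 N) := fun P => rfl
  have hδs : Function.Surjective δ := by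
    rintro ⟨⟨h, hh⟩, k, hk⟩
    have hk' : ℓ ^ k • h = 0 := congrArg Subtype.val hk
    have hh' : φ h = 0 := hh
    obtain ⟨u, v, huv⟩ := hcop k
    choose d hd using hdiv
    let a : ℕ → A := fun n => Nat.rec (d (u • h)) (fun _ x => d x) n
    have ha : ∀ n, ℓ • a (n + 1) = a n := fun n => hd _
    have ha' : ∀ n, ℓ ^ (n + 1) • a n = u • h := by
      intro n
      induction n with
      | zero => rw [zero_add, pow_one]; exact hd (u • h)
      | succ n ih => rw [pow_succ, mul_smul, ha, ih]
    refine ⟨⟨fun n => φ (a n), fun n => ?_, fun n => ?_⟩, ?_⟩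
    · rw [← map_nsmul, ha', map_zsmul, hh', smul_zero]
    · rw [← map_nsmul, ha]
    · apply Subtype.ext
      apply Subtype.ext
      rw [hδ]
      show ψ (φ (a N)) = h
      rw [hψ, smul_comm, ha']
      have h1 : (u * (m : ℤ) + v * ((ℓ ^ k : ℕ) : ℤ)) • h = h := by rw [huv, one_smul]
      rw [add_smul, mul_smul, mul_smul, natCast_zsmul, natCast_zsmul, hk', smul_zero,
        add_zero] at h1
      rw [smul_comm, h1]
  have hkerδ : (tateMap ℓ φ).range = δ.ker := by
    ext P
    constructor
    · rintro ⟨Q, rfl⟩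
      apply Subtype.ext
      apply Subtype.ext
      rw [hδ]
      show ψ (φ (Q.1 N)) = 0
      rw [hψ, smul_comm, Q.2.1 N, smul_zero]
    · intro hP
      have hP0 : ψ (P.1 N) = 0 := by
        rw [← hδ, (AddMonoidHom.mem_ker).1 hP]
        rfl
      have hshift : ∀ j n, ℓ ^ j • P.1 (n + j) = P.1 n := by
        intro j
        induction j with
        | zero => intro n; simp
        | succ j ih => intro n; rw [pow_succ, mul_smul, ← add_assoc, P.2.2, ih]
      have hR0 : ∀ n, ℓ ^ (n + 1) • ψ (P.1 (n + (N + 1))) = 0 := by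
        intro n
        rw [← map_nsmul, show n + (N + 1) = N + (n + 1) by omega, hshift, hP0]
      have hR1 : ∀ n, ℓ • ψ (P.1 (n + 1 + (N + 1))) = ψ (P.1 (n + (N + 1))) := by
        intro n
        rw [← map_nsmul, show n + 1 + (N + 1) = n + (N + 1) + 1 by omega, P.2.2]
      have hφR : ∀ n, φ (ψ (P.1 (n + (N + 1)))) = m • P.1 n := by
        intro n
        rw [hφψ, hshift]
      choose u v huv using fun n : ℕ => hcop (n + 1)
      refine ⟨⟨fun n => u n • ψ (P.1 (n + (N + 1))), fun n => ?_, fun n => ?_⟩, ?_⟩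
      · rw [smul_comm, hR0, smul_zero]
      · rw [smul_comm, hR1]
        have e1 := huv n
        have e2 := huv (n + 1)
        have key : u (n + 1) = u n +
            (u (n + 1) * v n - u n * v (n + 1) * ℓ) * ((ℓ ^ (n + 1) : ℕ) : ℤ) := by
          push_cast at e1 e2 ⊢
          linear_combination (-u (n + 1)) * e1 + u n * e2
        rw [key, add_smul, mul_smul _ (((ℓ ^ (n + 1) : ℕ) : ℤ)), natCast_zsmul, hR0, smul_zero,
          add_zero]
      · apply Subtype.ext
        funext n
        show φ (u n • ψ (P.1 (n + (N + 1)))) = P.1 n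
        rw [map_zsmul, hφR]
        have h1 : (u n * (m : ℤ) + v n * ((ℓ ^ (n + 1) : ℕ) : ℤ)) • P.1 n = P.1 n := by
          rw [huv, one_smul]
        rw [add_smul, mul_smul, mul_smul, natCast_zsmul, natCast_zsmul, P.2.1 n, smul_zero,
          add_zero] at h1
        exact h1
  exact ⟨((QuotientAddGroup.quotientAddEquivOfEq hkerδ).trans
    (QuotientAddGroup.quotientKerEquivOfSurjective δ hδs)).symm⟩
end

section
/- Let ℓ be a prime and let A be an ℓ-divisible abelian group. For each finite subgroup H of A let q_H : A → A/H denote the quotient homomorphism. Then there exists a family of group isomorphisms δ_H : H[ℓ^∞] ≅ coker(T_ℓ q_H), indexed by the finite subgroups H of A, which is natural in the following sense: whenever H ≤ H' are finite subgroups of A and ψ : A/H → A/H' is the unique homomorphism with ψ ∘ q_H = q_{H'}, the composite of δ_H with the map coker(T_ℓ q_H) → coker(T_ℓ q_{H'}) induced by T_ℓψ equals the restriction of δ_{H'} to H[ℓ^∞] ⊆ H'[ℓ^∞]. -/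
/-- The inclusion `H[ℓ^∞] → H'[ℓ^∞]` induced by an inclusion `H ≤ H'` of subgroups. -/
def primaryInclusion (ℓ : ℕ) {A : Type*} [AddCommGroup A] {H H' : AddSubgroup A}
    (hle : H ≤ H') : primaryPart ℓ H →+ primaryPart ℓ H' where
  toFun x := ⟨AddSubgroup.inclusion hle x.1, by
    obtain ⟨k, hk⟩ := x.2
    exact ⟨k, by rw [← map_nsmul, hk, map_zero]⟩⟩
  map_zero' := Subtype.ext (map_zero _)
  map_add' x y := Subtype.ext (map_add _ _ _)

theorem exists_equiv_of_ker {D B C : Type*} [AddCommGroup D] [AddCommGroup B] [AddCommGroup C]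
    (f : D →+ B) (g : D →+ C) (hf : Function.Surjective f) (hg : Function.Surjective g)
    (hk : ∀ x, f x = 0 ↔ g x = 0) : ∃ e : B ≃+ C, ∀ x, e (f x) = g x := by
  have hker : f.ker = g.ker := by
    ext x; simp only [AddMonoidHom.mem_ker]; exact hk x
  refine ⟨((QuotientAddGroup.quotientKerEquivOfSurjective f hf).symm.trans
    (QuotientAddGroup.quotientAddEquivOfEq hker)).trans
    (QuotientAddGroup.quotientKerEquivOfSurjective g hg), fun x => ?_⟩
  have : (QuotientAddGroup.quotientKerEquivOfSurjective f hf).symm (f x) =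
      (QuotientAddGroup.mk x : D ⧸ f.ker) := by
    rw [AddEquiv.symm_apply_eq]; rfl
  rw [AddEquiv.trans_apply, AddEquiv.trans_apply, this]
  rfl

/-- Every element begins an `ℓ`-divisible sequence. -/
theorem exists_div_seq {A : Type*} [AddCommGroup A] (ℓ : ℕ)
    (hdiv : ∀ a : A, ∃ b : A, ℓ • b = a) (a : A) :
    ∃ x : ℕ → A, x 0 = a ∧ ∀ n, ℓ • x (n + 1) = x n := by
  choose d hd using hdiv
  exact ⟨fun n => Nat.rec a (fun _ y => d y) n, rfl, fun n => hd _⟩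

theorem pow_smul_seq {A : Type*} [AddCommGroup A] (ℓ : ℕ) (x : ℕ → A)
    (hx : ∀ n, ℓ • x (n + 1) = x n) (n k : ℕ) : ℓ ^ k • x (n + k) = x n := by
  induction k with
  | zero => simp
  | succ k ih => rw [pow_succ, mul_smul, ← add_assoc, hx, ih]

/-- The images of `ℓ ^ N` on a finite group stabilise. -/
theorem exists_stable {A : Type*} [AddCommGroup A] (ℓ : ℕ) (H : AddSubgroup A) [Finite H] :
    ∃ N : ℕ, ∀ h ∈ H, ∃ k ∈ H, ℓ ^ N • h = ℓ ^ (N + 1) • k := by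
  have key : ∃ N : ℕ, ∀ m, N ≤ m →
      (nsmulAddMonoidHom (α := H) (ℓ ^ N)).range = (nsmulAddMonoidHom (α := H) (ℓ ^ m)).range := by
    let F : ℕ →o (AddSubgroup H)ᵒᵈ :=
      ⟨fun N => OrderDual.toDual (nsmulAddMonoidHom (α := H) (ℓ ^ N)).range, by
        intro a b hab
        rw [OrderDual.toDual_le_toDual]
        rintro _ ⟨y, rfl⟩
        obtain ⟨c, rfl⟩ := Nat.exists_eq_add_of_le hab
        exact ⟨ℓ ^ c • y, by simp [pow_add, mul_smul]⟩⟩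
    obtain ⟨N, hN⟩ := WellFoundedGT.monotone_chain_condition F
    exact ⟨N, fun m hm => OrderDual.toDual.injective (hN m hm)⟩
  obtain ⟨N, hN⟩ := key
  refine ⟨N, fun h hh => ?_⟩
  have : (ℓ ^ N • (⟨h, hh⟩ : H)) ∈ (nsmulAddMonoidHom (α := H) (ℓ ^ (N + 1))).range := by
    rw [← hN (N + 1) (Nat.le_succ N)]
    exact ⟨_, rfl⟩
  obtain ⟨k, hk⟩ := this
  exact ⟨k.1, k.2, by simpa using (congrArg Subtype.val hk).symm⟩

/-- An `ℓ`-primary element starting an `ℓ`-divisible sequence in a finite group is zero. -/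
theorem div_seq_zero {A : Type*} [AddCommGroup A] (ℓ : ℕ) (H : AddSubgroup A) [Finite H]
    (u : ℕ → A) (huH : ∀ n, u n ∈ H) (hu : ∀ n, ℓ • u (n + 1) = u n)
    (h0 : ∃ k, ℓ ^ k • u 0 = 0) : u 0 = 0 := by
  obtain ⟨k, hk⟩ := h0
  have hprim : ∀ n, ℓ ^ (n + k) • u n = 0 := by
    intro n
    have := pow_smul_seq ℓ u hu 0 n
    rw [zero_add] at this
    rw [add_comm, pow_add, mul_smul, this, hk]
  -- two terms of the sequence coincide
  obtain ⟨i, j, hij, he⟩ := Finite.exists_ne_map_eq_of_infinite (fun n => (⟨u n, huH n⟩ : H))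
  have he' : u i = u j := congrArg Subtype.val he
  have main : ∀ i d, u i = u (i + (d + 1)) → u 0 = 0 := by
    intro i d he
    -- `u 0 = u (d+1)`
    have h1 : ∀ m, m ≤ i → u (i - m) = u (i - m + (d + 1)) := by
      intro m
      induction m with
      | zero => intro _; simpa using he
      | succ m ih =>
        intro hm
        have e := ih (by omega)
        have e1 : i - m = i - (m + 1) + 1 := by omega
        rw [e1] at e
        rw [← hu (i - (m + 1)), e, ← hu (i - (m + 1) + (d + 1))]
        congr 2; omega
    have h2 : u 0 = u (d + 1) := by simpa using h1 i le_rfl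
    have h3 : ℓ ^ (d + 1) • u 0 = u 0 := by
      conv_lhs => rw [h2]
      simpa using pow_smul_seq ℓ u hu 0 (d + 1)
    have h4 : ∀ m : ℕ, ℓ ^ ((d + 1) * m) • u 0 = u 0 := by
      intro m
      induction m with
      | zero => simp
      | succ m ih => rw [Nat.mul_succ, pow_add, mul_smul, h3, ih]
    have h5 := h4 k
    rw [show (d + 1) * k = d * k + k by ring, pow_add, mul_smul, hk, smul_zero] at h5
    exact h5.symm
  rcases lt_or_gt_of_ne hij with h | h
  · obtain ⟨d, rfl⟩ := Nat.exists_eq_add_of_lt h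
    exact main i d he'
  · obtain ⟨d, rfl⟩ := Nat.exists_eq_add_of_lt h
    exact main j d he'.symm

/-- Lifting an element of the Tate module of `A ⧸ H` to an `ℓ`-divisible sequence in `A`. -/
theorem exists_lift_seq {A : Type*} [AddCommGroup A] (ℓ : ℕ) (H : AddSubgroup A) [Finite H]
    (P : TateModule ℓ (A ⧸ H)) :
    ∃ x : ℕ → A, (∀ n, ℓ • x (n + 1) = x n) ∧ x 0 ∈ H ∧ (∃ k, ℓ ^ k • x 0 = 0) ∧
      ∀ n, P.1 n = QuotientAddGroup.mk' H (x (n + 1)) := by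
  obtain ⟨N, hN⟩ := exists_stable ℓ H
  -- `Q` is `P` shifted, starting with `0`
  let Q : ℕ → A ⧸ H := fun n => Nat.casesOn n 0 (fun m => P.1 m)
  have hQ0 : Q 0 = 0 := rfl
  have hQs : ∀ n, Q (n + 1) = P.1 n := fun n => rfl
  have hQ : ∀ n, ℓ • Q (n + 1) = Q n := by
    intro n
    cases n with
    | zero =>
      have h := P.2.1 0
      rw [zero_add, pow_one] at h
      exact h
    | succ n => exact P.2.2 n
  choose a ha using fun n => QuotientAddGroup.mk'_surjective H (Q n)
  have hmem : ∀ y : A, QuotientAddGroup.mk' H y = 0 → y ∈ H := fun y hy =>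
    (QuotientAddGroup.eq_zero_iff y).1 hy
  have hmem' : ∀ y ∈ H, QuotientAddGroup.mk' H y = 0 := fun y hy =>
    (QuotientAddGroup.eq_zero_iff y).2 hy
  let b : ℕ → A := fun n => ℓ ^ N • a (n + N)
  have hb : ∀ n, QuotientAddGroup.mk' H (b n) = Q n := by
    intro n
    rw [map_nsmul, ha, pow_smul_seq ℓ Q hQ]
  have hbd : ∀ n, ∃ s ∈ H, ℓ • b (n + 1) - b n = ℓ ^ N • s := by
    intro n
    refine ⟨ℓ • a (n + 1 + N) - a (n + N), hmem _ ?_, ?_⟩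
    · rw [map_sub, map_nsmul, ha, ha, show n + 1 + N = n + N + 1 by omega, hQ, sub_self]
    · simp only [b]; rw [smul_sub, smul_comm]
  -- `ℓ ^ N H = ℓ ^ (N + m) H`
  have hNm : ∀ m, ∀ h ∈ H, ∃ k ∈ H, ℓ ^ N • h = ℓ ^ (N + m) • k := by
    intro m
    induction m with
    | zero => exact fun h hh => ⟨h, hh, rfl⟩
    | succ m ih =>
      intro h hh
      obtain ⟨k, hk, e⟩ := ih h hh
      obtain ⟨k', hk', e'⟩ := hN k hk
      refine ⟨k', hk', ?_⟩
      rw [e, add_comm N m, pow_add, mul_smul, e', ← mul_smul, ← pow_add]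
      congr 2; omega
  have hb0 : b 0 ∈ H := hmem _ (by rw [hb, hQ0])
  obtain ⟨k0, hk0, e0⟩ := hNm N (b 0) hb0
  have step : ∀ n (y : A), (∃ s ∈ H, y - b n = ℓ ^ N • s) →
      ∃ z, ℓ • z = y ∧ ∃ s ∈ H, z - b (n + 1) = ℓ ^ N • s := by
    rintro n y ⟨s, hs, e⟩
    obtain ⟨t, ht, e'⟩ := hbd n
    obtain ⟨r, hr, e''⟩ := hN (s - t) (H.sub_mem hs ht)
    refine ⟨b (n + 1) + ℓ ^ N • r, ?_, r, hr, by abel⟩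
    have e3 : ℓ • ℓ ^ N • r = (y - b n) - (ℓ • b (n + 1) - b n) := by
      rw [← mul_smul, ← pow_succ', ← e'', smul_sub, ← e, ← e']
    rw [smul_add, e3]
    abel
  choose! f hf1 hf2 using step
  let x : ℕ → A := fun n => Nat.rec (b 0 - ℓ ^ N • k0) (fun n y => f n y) n
  have hxs : ∀ n, x (n + 1) = f n (x n) := fun n => rfl
  have hx0 : x 0 = b 0 - ℓ ^ N • k0 := rfl
  have hinv : ∀ n, ∃ s ∈ H, x n - b n = ℓ ^ N • s := by
    intro n
    induction n with
    | zero => exact ⟨-k0, H.neg_mem hk0, by rw [hx0, smul_neg]; abel⟩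
    | succ n ih => exact hf2 n _ ih
  refine ⟨x, fun n => hf1 n _ (hinv n), ?_, ⟨N, ?_⟩, fun n => ?_⟩
  · rw [hx0]; exact H.sub_mem hb0 (H.nsmul_mem hk0 _)
  · rw [hx0, smul_sub, e0, ← mul_smul, ← pow_add, sub_self]
  · obtain ⟨s, hs, e⟩ := hinv (n + 1)
    have h1 : x (n + 1) - b (n + 1) ∈ H := by rw [e]; exact H.nsmul_mem hs _
    have h2 := hmem' _ h1
    rw [map_sub, sub_eq_zero] at h2
    exact ((h2.trans (hb (n + 1))).trans (hQs n)).symm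

theorem exists_delta {A : Type*} [AddCommGroup A] (ℓ : ℕ)
    (hdiv : ∀ a : A, ∃ b : A, ℓ • b = a) (H : AddSubgroup A) (hH : Finite H) :
    ∃ δ : primaryPart ℓ H ≃+
        (TateModule ℓ (A ⧸ H) ⧸ (tateMap ℓ (QuotientAddGroup.mk' H)).range),
      ∀ (x : ℕ → A) (h : primaryPart ℓ H) (P : TateModule ℓ (A ⧸ H)),
        (∀ n, ℓ • x (n + 1) = x n) → x 0 = h.1.1 →
        (∀ n, P.1 n = QuotientAddGroup.mk' H (x (n + 1))) →
        δ h = QuotientAddGroup.mk P := by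
  let D : AddSubgroup ((ℕ → A) × primaryPart ℓ H × TateModule ℓ (A ⧸ H)) :=
    { carrier := {t | (∀ n, ℓ • t.1 (n + 1) = t.1 n) ∧ t.1 0 = t.2.1.1.1 ∧
        ∀ n, t.2.2.1 n = QuotientAddGroup.mk' H (t.1 (n + 1))}
      zero_mem' := ⟨fun _ => smul_zero _, rfl, fun _ => rfl⟩
      add_mem' := by
        rintro ⟨x, h, P⟩ ⟨x', h', P'⟩ ⟨a1, a2, a3⟩ ⟨b1, b2, b3⟩
        refine ⟨fun n => ?_, ?_, fun n => ?_⟩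
        · exact (smul_add ℓ _ _).trans (congrArg₂ (· + ·) (a1 n) (b1 n))
        · exact congrArg₂ (· + ·) a2 b2
        · exact (congrArg₂ (· + ·) (a3 n) (b3 n)).trans (map_add _ _ _).symm
      neg_mem' := by
        rintro ⟨x, h, P⟩ ⟨a1, a2, a3⟩
        refine ⟨fun n => ?_, ?_, fun n => ?_⟩
        · exact (smul_neg ℓ _).trans (congrArg (- ·) (a1 n))
        · exact congrArg (- ·) a2
        · exact (congrArg (- ·) (a3 n)).trans (map_neg _ _).symm }
  let f : D →+ primaryPart ℓ H :=
    ((AddMonoidHom.fst _ _).comp (AddMonoidHom.snd _ _)).comp D.subtype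
  let g : D →+ (TateModule ℓ (A ⧸ H) ⧸ (tateMap ℓ (QuotientAddGroup.mk' H)).range) :=
    (QuotientAddGroup.mk' _).comp
      (((AddMonoidHom.snd _ _).comp (AddMonoidHom.snd _ _)).comp D.subtype)
  have hf : Function.Surjective f := by
    intro h
    obtain ⟨x, hx0, hx⟩ := exists_div_seq ℓ hdiv h.1.1
    refine ⟨⟨(x, h, ⟨fun n => QuotientAddGroup.mk' H (x (n + 1)), fun n => ?_, fun n => ?_⟩),
      hx, hx0, fun n => rfl⟩, rfl⟩
    · have := pow_smul_seq ℓ x hx 0 (n + 1)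
      rw [zero_add] at this
      rw [← map_nsmul, this, hx0]
      exact (QuotientAddGroup.eq_zero_iff _).2 h.1.2
    · rw [← map_nsmul, hx]
  have hg : Function.Surjective g := by
    intro c
    obtain ⟨P, rfl⟩ := QuotientAddGroup.mk'_surjective _ c
    obtain ⟨x, hx, hxH, ⟨k, hk⟩, hP⟩ := exists_lift_seq ℓ H P
    exact ⟨⟨(x, ⟨⟨x 0, hxH⟩, k, Subtype.ext hk⟩, P), hx, rfl, hP⟩, rfl⟩
  obtain ⟨δ, hδ⟩ := exists_equiv_of_ker f g hf hg (by
    rintro ⟨⟨x, h, P⟩, hx, hx0, hP⟩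
    dsimp only at hx hx0 hP
    change h = 0 ↔ (QuotientAddGroup.mk P : _ ⧸ (tateMap ℓ (QuotientAddGroup.mk' H)).range) = 0
    rw [QuotientAddGroup.eq_zero_iff]
    constructor
    · rintro rfl
      have hx0' : x 0 = 0 := hx0
      refine ⟨⟨fun n => x (n + 1), fun n => ?_, fun n => hx _⟩, Subtype.ext (funext fun n => ?_)⟩
      · have := pow_smul_seq ℓ x hx 0 (n + 1)
        rwa [zero_add, hx0'] at this
      · exact (hP n).symm
    · rintro ⟨t, ht⟩
      have ht' : ∀ n, QuotientAddGroup.mk' H (t.1 n) = P.1 n := fun n =>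
        congrFun (congrArg Subtype.val ht) n
      let u : ℕ → A := fun n => x n - ℓ • t.1 n
      have htt : ∀ n, ℓ • t.1 (n + 1) = t.1 n := t.2.2
      have hu0 : u 0 = x 0 := by
        have := t.2.1 0
        simp only [zero_add, pow_one] at this
        simp only [u]; rw [this, sub_zero]
      have hz : u 0 = 0 := by
        refine div_seq_zero ℓ H u ?_ ?_ ?_
        · intro n
          cases n with
          | zero => rw [hu0, hx0]; exact h.1.2
          | succ n =>
            simp only [u]; rw [htt]
            refine (QuotientAddGroup.eq_zero_iff _).1 ?_
            change QuotientAddGroup.mk' H (x (n + 1) - t.1 n) = 0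
            rw [map_sub, ht', hP, sub_self]
        · intro n
          simp only [u]; rw [smul_sub, hx, htt]
        · obtain ⟨k, hk⟩ := h.2
          refine ⟨k, ?_⟩
          rw [hu0, hx0]
          exact congrArg Subtype.val hk
      apply Subtype.ext
      apply Subtype.ext
      rw [← hx0, ← hu0, hz]; rfl)
  exact ⟨δ, fun x h P h1 h2 h3 => hδ ⟨(x, h, P), h1, h2, h3⟩⟩

/-- For an `ℓ`-divisible abelian group `A` there is a family of isomorphisms
`δ_H : H[ℓ^∞] ≃ coker (T_ℓ q_H)`, indexed by the finite subgroups `H ≤ A` (with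
`q_H : A → A/H` the quotient map), natural with respect to enlarging the kernel: for
`H ≤ H'` and `ψ : A/H → A/H'` the unique homomorphism with `ψ ∘ q_H = q_{H'}`, the
composite of `δ_H` with the map on cokernels induced by `T_ℓψ` is the restriction of
`δ_{H'}` to `H[ℓ^∞] ⊆ H'[ℓ^∞]`. -/
theorem tate_coker_isomorphism_natural
    (ℓ : ℕ) (hℓ : ℓ.Prime) (A : Type*) [AddCommGroup A]
    (hdiv : ∀ a : A, ∃ b : A, ℓ • b = a) :
    ∃ δ : ∀ H : AddSubgroup A, Finite H →
      (primaryPart ℓ H ≃+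
        (TateModule ℓ (A ⧸ H) ⧸ (tateMap ℓ (QuotientAddGroup.mk' H)).range)),
      ∀ (H H' : AddSubgroup A) (hH : Finite H) (hH' : Finite H') (hle : H ≤ H')
        (ψ : A ⧸ H →+ A ⧸ H')
        (hψ : ψ.comp (QuotientAddGroup.mk' H) = QuotientAddGroup.mk' H')
        (hcompat : (tateMap ℓ (QuotientAddGroup.mk' H)).range ≤
          ((tateMap ℓ (QuotientAddGroup.mk' H')).range).comap (tateMap ℓ ψ))
        (h : primaryPart ℓ H),
        QuotientAddGroup.map _ _ (tateMap ℓ ψ) hcompat (δ H hH h) =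
          δ H' hH' (primaryInclusion ℓ hle h) := by
  choose δ hδ using fun (H : AddSubgroup A) (hH : Finite H) => exists_delta ℓ hdiv H hH
  refine ⟨δ, ?_⟩
  intro H H' hH hH' hle ψ hψ hcompat h
  obtain ⟨x, hx0, hx⟩ := exists_div_seq ℓ hdiv h.1.1
  let P : TateModule ℓ (A ⧸ H) :=
    ⟨fun n => QuotientAddGroup.mk' H (x (n + 1)), by
      intro n
      have := pow_smul_seq ℓ x hx 0 (n + 1)
      rw [zero_add] at this
      rw [← map_nsmul, this, hx0]
      exact (QuotientAddGroup.eq_zero_iff _).2 h.1.2, by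
      intro n
      rw [← map_nsmul, hx]⟩
  rw [hδ H hH x h P hx hx0 (fun _ => rfl),
    hδ H' hH' x (primaryInclusion ℓ hle h) (tateMap ℓ ψ P) hx hx0
      (fun n => DFunLike.congr_fun hψ (x (n + 1)))]
  rfl
end

section
/- Let A and B be abelian groups with A divisible, and let φ : A → B be a surjective group homomorphism whose kernel H is finite. Then H is isomorphic, as an abelian group, to the direct sum over all primes ℓ of the cokernels of the induced maps T_ℓφ : T_ℓA → T_ℓB (all but finitely many of these cokernels being trivial). -/
/-- Compatible lifts of a Tate sequence, by the lemma of Kőnig. -/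
theorem exists_compatible_lift {A B : Type*} [AddCommGroup A] [AddCommGroup B] (φ : A →+ B)
    (hsurj : Function.Surjective φ) (hker : Finite φ.ker) (ℓ : ℕ) (Q : ℕ → B)
    (hQ : ∀ n, ℓ • Q (n + 1) = Q n) :
    ∃ a : ℕ → A, (∀ n, φ (a n) = Q n) ∧ ∀ n, ℓ • a (n + 1) = a n := by
  have hfin : ∀ n, Finite {a : A // φ a = Q n} := by
    intro n
    obtain ⟨b, hb⟩ := hsurj (Q n)
    refine Finite.of_injective
      (fun a : {a : A // φ a = Q n} => (⟨a.1 - b, by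
        rw [AddMonoidHom.mem_ker, map_sub, a.2, hb, sub_self]⟩ : φ.ker)) ?_
    intro x y h
    exact Subtype.ext (sub_left_injective (congrArg Subtype.val h))
  have hne : ∀ n, Nonempty {a : A // φ a = Q n} := fun n =>
    let ⟨b, hb⟩ := hsurj (Q n); ⟨⟨b, hb⟩⟩
  have hQ' : ∀ k i, ℓ ^ k • Q (i + k) = Q i := by
    intro k
    induction k with
    | zero => intro i; simp
    | succ k ih => intro i; rw [pow_succ, mul_smul, ← add_assoc, hQ, ih]
  obtain ⟨f, hf⟩ := exists_seq_forall_proj_of_forall_finite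
    (α := fun n => {a : A // φ a = Q n})
    (fun {i j} hij a => ⟨ℓ ^ (j - i) • a.1, by
      rw [map_nsmul, a.2]
      obtain ⟨k, rfl⟩ := Nat.exists_eq_add_of_le hij
      rw [Nat.add_sub_cancel_left, hQ']⟩)
    (by intro i a; apply Subtype.ext; simp)
    (by
      intro i j k hij hjk a
      apply Subtype.ext
      show ℓ ^ (j - i) • ℓ ^ (k - j) • a.1 = ℓ ^ (k - i) • a.1
      rw [← mul_smul, ← pow_add]
      congr 2
      omega)
    (by intro i a; exact Set.toFinite _)
  refine ⟨fun n => (f n).1, fun n => (f n).2, fun n => ?_⟩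
  have := congrArg Subtype.val (hf (Nat.le_succ n))
  simpa using this

/-- Divisible sequences with a prescribed starting point. -/
theorem exists_division_seq {A : Type*} [AddCommGroup A]
    (hdiv : ∀ (a : A) (n : ℕ), 0 < n → ∃ b : A, n • b = a) (ℓ : ℕ) (hℓ : 0 < ℓ) (h : A) :
    ∃ a : ℕ → A, ℓ • a 0 = h ∧ ∀ n, ℓ • a (n + 1) = a n := by
  choose d hd using fun a => hdiv a ℓ hℓ
  exact ⟨fun n => Nat.rec (d h) (fun _ x => d x) n, hd h, fun n => hd _⟩

theorem division_seq_pow {A : Type*} [AddCommGroup A] {ℓ : ℕ} {h : A} {a : ℕ → A}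
    (h0 : ℓ • a 0 = h) (hs : ∀ n, ℓ • a (n + 1) = a n) (n : ℕ) : ℓ ^ (n + 1) • a n = h := by
  induction n with
  | zero => simpa using h0
  | succ n ih => rw [pow_succ, mul_smul, hs, ih]

/-- The connecting homomorphism. -/
theorem exists_connecting {A B : Type*} [AddCommGroup A] [AddCommGroup B]
    (hdiv : ∀ (a : A) (n : ℕ), 0 < n → ∃ b : A, n • b = a)
    (φ : A →+ B) (hsurj : Function.Surjective φ) (hker : Finite φ.ker) (ℓ : ℕ) (hℓ : ℓ.Prime) :
    ∃ δ : φ.ker →+ TateModule ℓ B ⧸ (tateMap ℓ φ).range, Function.Surjective δ ∧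
      (∀ (h : φ.ker) (m : ℕ), m.Coprime ℓ → m • h = 0 → δ h = 0) ∧
      (∀ h : φ.ker, δ h = 0 → ∀ n : ℕ, ∃ h' : φ.ker, ℓ ^ n • h' = h) := by
  choose s hs0 hs using fun h : φ.ker => exists_division_seq hdiv ℓ hℓ.pos (h : A)
  have hT : ∀ (h : φ.ker) (a : ℕ → A), ℓ • a 0 = (h : A) → (∀ n, ℓ • a (n + 1) = a n) →
      (fun n => φ (a n)) ∈ TateModule ℓ B := by
    intro h a h0 h1
    refine ⟨fun n => ?_, fun n => ?_⟩
    · show ℓ ^ (n + 1) • φ (a n) = 0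
      rw [← map_nsmul, division_seq_pow h0 h1]; exact h.2
    · show ℓ • φ (a (n + 1)) = φ (a n)
      rw [← map_nsmul, h1]
  let d : φ.ker → TateModule ℓ B ⧸ (tateMap ℓ φ).range := fun h =>
    QuotientAddGroup.mk ⟨fun n => φ (s h n), hT h (s h) (hs0 h) (hs h)⟩
  have hd : ∀ (h : φ.ker) (a : ℕ → A) (h0 : ℓ • a 0 = (h : A))
      (h1 : ∀ n, ℓ • a (n + 1) = a n),
      d h = QuotientAddGroup.mk ⟨fun n => φ (a n), hT h a h0 h1⟩ := by
    intro h a h0 h1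
    refine QuotientAddGroup.eq.2 ⟨⟨fun n => -(s h n) + a n, fun n => ?_, fun n => ?_⟩, ?_⟩
    · show ℓ ^ (n + 1) • (-(s h n) + a n) = 0
      rw [smul_add, smul_neg, division_seq_pow h0 h1, division_seq_pow (hs0 h) (hs h),
        neg_add_cancel]
    · show ℓ • (-(s h (n + 1)) + a (n + 1)) = -(s h n) + a n
      rw [smul_add, smul_neg, h1, hs]
    · apply Subtype.ext
      funext n
      show φ (-(s h n) + a n) = -φ (s h n) + φ (a n)
      rw [map_add, map_neg]
  refine ⟨AddMonoidHom.mk' d ?_, ?_, ?_, ?_⟩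
  · intro x y
    rw [hd (x + y) (fun n => s x n + s y n) (by rw [smul_add, hs0, hs0]; rfl)
      (fun n => by rw [smul_add, hs, hs])]
    refine congrArg (QuotientAddGroup.mk (s := (tateMap ℓ φ).range)) ?_
    apply Subtype.ext
    funext n
    exact map_add φ _ _
  · intro q
    obtain ⟨Q, rfl⟩ := QuotientAddGroup.mk_surjective q
    obtain ⟨a, ha, ha1⟩ := exists_compatible_lift φ hsurj hker ℓ Q.1 Q.2.2
    have hk : ℓ • a 0 ∈ φ.ker := by
      rw [AddMonoidHom.mem_ker, map_nsmul, ha]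
      simpa using Q.2.1 0
    refine ⟨⟨ℓ • a 0, hk⟩, ?_⟩
    show d _ = _
    rw [hd ⟨ℓ • a 0, hk⟩ a rfl ha1]
    refine congrArg (QuotientAddGroup.mk (s := (tateMap ℓ φ).range)) ?_
    apply Subtype.ext
    funext n
    exact ha n
  · intro h m hm hmh
    have hmh' : m • (h : A) = 0 := by simpa using congrArg Subtype.val hmh
    obtain ⟨u, hu⟩ : ∃ u : ℕ, ℓ • u • (h : A) = h := by
      obtain ⟨x, y, hxy⟩ := (Nat.isCoprime_iff_coprime.2 hm : IsCoprime (m : ℤ) ℓ)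
      have hord : addOrderOf (h : A) ∣ m := addOrderOf_dvd_of_nsmul_eq_zero hmh'
      rcases Nat.eq_zero_or_pos m with rfl | hm0
      · rw [Nat.coprime_zero_left] at hm
        exact absurd hm hℓ.one_lt.ne'
      · refine ⟨(y % m).toNat, ?_⟩
        have e : (((y % m).toNat : ℕ) : ℤ) = y - m * (y / m) := by
          rw [Int.toNat_of_nonneg (Int.emod_nonneg _ (by omega)), Int.emod_def]
        have hz : (m : ℤ) • (h : A) = 0 := by rw [natCast_zsmul, hmh']
        rw [← natCast_zsmul, ← natCast_zsmul (h : A), e, ← mul_smul]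
        have e2 : (ℓ : ℤ) * (y - m * (y / m)) = 1 + (-x - ℓ * (y / m)) * m := by
          linear_combination hxy
        rw [e2, add_smul, one_smul, mul_smul, hz, smul_zero, add_zero]
    show d h = 0
    rw [hd h (fun n => u ^ (n + 1) • (h : A)) (by simpa using hu) (fun n => by
      rw [pow_succ u (n + 1), mul_smul, smul_comm, hu])]
    rw [← QuotientAddGroup.mk_zero]
    refine congrArg (QuotientAddGroup.mk (s := (tateMap ℓ φ).range)) ?_
    apply Subtype.ext
    funext n
    show φ (u ^ (n + 1) • (h : A)) = 0
    rw [map_nsmul, (AddMonoidHom.mem_ker).1 h.2, smul_zero]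
  · intro h h0 n
    obtain ⟨P, hP⟩ := (QuotientAddGroup.eq_zero_iff _).1 h0
    have hPn : φ (P.1 n) = φ (s h n) := congrFun (congrArg Subtype.val hP) n
    refine ⟨ℓ • ⟨s h n - P.1 n, by rw [AddMonoidHom.mem_ker, map_sub, hPn, sub_self]⟩, ?_⟩
    apply Subtype.ext
    rw [← mul_smul, ← pow_succ]
    show ℓ ^ (n + 1) • (s h n - P.1 n) = h
    rw [smul_sub, division_seq_pow (hs0 h) (hs h), P.2.1 n, sub_zero]

open DirectSum in
/-- Let `A`, `B` be abelian groups with `A` divisible and let `φ : A → B` be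
a surjective homomorphism with finite kernel `H`. Then `H` is isomorphic to the direct sum,
over all primes `ℓ`, of the cokernels of `T_ℓφ : T_ℓA → T_ℓB`, all but finitely many of these
cokernels being trivial. -/
theorem ker_isomorphic_directSum_coker_tateMap
    (A B : Type*) [AddCommGroup A] [AddCommGroup B]
    (hdiv : ∀ (a : A) (n : ℕ), 0 < n → ∃ b : A, n • b = a)
    (φ : A →+ B) (hsurj : Function.Surjective φ) (hker : Finite φ.ker) :
    {ℓ : Nat.Primes | Nontrivial (TateModule (ℓ : ℕ) B ⧸ (tateMap (ℓ : ℕ) φ).range)}.Finite ∧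
    Nonempty (φ.ker ≃+
      ⨁ ℓ : Nat.Primes, TateModule (ℓ : ℕ) B ⧸ (tateMap (ℓ : ℕ) φ).range) := by
  classical
  choose δ hδs hδ1 hδ2 using fun ℓ : Nat.Primes =>
    exists_connecting hdiv φ hsurj hker (ℓ : ℕ) ℓ.2
  have hNpos : 0 < Nat.card φ.ker := Nat.card_pos
  have hN : ∀ h : φ.ker, Nat.card φ.ker • h = 0 := fun h => card_nsmul_eq_zero'
  generalize Nat.card φ.ker = N at hNpos hN
  have hSfin : {ℓ : Nat.Primes | (ℓ : ℕ) ∣ N}.Finite := by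
    refine Set.Finite.of_finite_image (f := fun ℓ : Nat.Primes => (ℓ : ℕ))
      ((Set.finite_Iic N).subset ?_) (Subtype.val_injective.injOn)
    rintro _ ⟨ℓ, hℓ, rfl⟩
    exact Nat.le_of_dvd hNpos hℓ
  have hzero : ∀ ℓ : Nat.Primes, ¬ (ℓ : ℕ) ∣ N → ∀ h, δ ℓ h = 0 := fun ℓ hℓ h =>
    hδ1 ℓ h N ((Nat.Prime.coprime_iff_not_dvd ℓ.2).2 hℓ).symm (hN h)
  refine ⟨hSfin.subset ?_, ?_⟩
  · intro ℓ hℓ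
    by_contra hnd
    obtain ⟨q, hq⟩ := @exists_ne _ hℓ 0
    obtain ⟨h, rfl⟩ := hδs ℓ q
    exact hq (hzero ℓ hnd h)
  let F : φ.ker →+ ⨁ ℓ : Nat.Primes, TateModule (ℓ : ℕ) B ⧸ (tateMap (ℓ : ℕ) φ).range :=
    ∑ ℓ ∈ hSfin.toFinset, (DirectSum.of
      (fun ℓ : Nat.Primes => TateModule (ℓ : ℕ) B ⧸ (tateMap (ℓ : ℕ) φ).range) ℓ).comp (δ ℓ)
  have hF : ∀ h ℓ, F h ℓ = δ ℓ h := by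
    intro h ℓ
    have e : F h = ∑ ℓ ∈ hSfin.toFinset, DirectSum.of
        (fun ℓ : Nat.Primes => TateModule (ℓ : ℕ) B ⧸ (tateMap (ℓ : ℕ) φ).range) ℓ (δ ℓ h) := by
      simp [F]
    rw [e, DFinsupp.finsetSum_apply]
    by_cases hm : (ℓ : ℕ) ∣ N
    · rw [Finset.sum_eq_single ℓ]
      · exact DirectSum.of_eq_same _ _
      · intro b _ hb
        exact DirectSum.of_eq_of_ne _ _ _ hb.symm
      · intro hn
        exact absurd (hSfin.mem_toFinset.2 hm) hn
    · rw [hzero ℓ hm]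
      refine Finset.sum_eq_zero fun b hb => DirectSum.of_eq_of_ne _ _ _ ?_
      rintro rfl
      exact hm (hSfin.mem_toFinset.1 hb)
  refine ⟨AddEquiv.ofBijective F ⟨?_, ?_⟩⟩
  · rw [injective_iff_map_eq_zero]
    intro h hh
    have hh' : ∀ ℓ, δ ℓ h = 0 := fun ℓ => by rw [← hF, hh]; rfl
    rw [← AddMonoid.addOrderOf_eq_one_iff]
    by_contra hne
    obtain ⟨p, hp, hpd⟩ := Nat.exists_prime_and_dvd hne
    obtain ⟨v, m, hm, rfl⟩ := Nat.exists_eq_pow_mul_and_not_dvd hNpos.ne' p hp.ne_one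
    obtain ⟨h', rfl⟩ := hδ2 ⟨p, hp⟩ h (hh' ⟨p, hp⟩) v
    apply hm
    refine hpd.trans (addOrderOf_dvd_of_nsmul_eq_zero ?_)
    show m • p ^ v • h' = 0
    rw [← mul_smul, mul_comm, hN]
  · intro x
    induction x using DirectSum.induction_on with
    | zero => exact ⟨0, map_zero F⟩
    | add x y hx hy =>
      obtain ⟨a, rfl⟩ := hx
      obtain ⟨b, rfl⟩ := hy
      exact ⟨a + b, map_add F a b⟩
    | of ℓ q =>
      obtain ⟨h, rfl⟩ := hδs ℓ q
      obtain ⟨v, m, hm, rfl⟩ := Nat.exists_eq_pow_mul_and_not_dvd hNpos.ne' (ℓ : ℕ) ℓ.2.ne_one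
      have hcop : Nat.Coprime (ℓ : ℕ) m := (Nat.Prime.coprime_iff_not_dvd ℓ.2).2 hm
      obtain ⟨c, hc1, hc2⟩ := Nat.chineseRemainder (hcop.pow_left v) 1 0
      refine ⟨c • h, DFinsupp.ext fun p => ?_⟩
      refine (hF _ p).trans ?_
      by_cases hp : p = ℓ
      · subst hp
        refine Eq.trans ?_ (DirectSum.of_eq_same
          (β := fun ℓ : Nat.Primes => TateModule (ℓ : ℕ) B ⧸ (tateMap (ℓ : ℕ) φ).range) _ _).symm
        rw [← sub_eq_zero, ← map_sub]
        refine hδ1 _ _ m hcop.symm ?_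
        rw [smul_sub, sub_eq_zero, ← mul_smul]
        have := (hc1.mul_left' m)
        rw [mul_one] at this
        rw [nsmul_eq_nsmul_iff_modEq]
        refine this.of_dvd ?_
        rw [mul_comm]
        exact addOrderOf_dvd_of_nsmul_eq_zero (hN h)
      · refine Eq.trans ?_ (DirectSum.of_eq_of_ne
          (β := fun ℓ : Nat.Primes => TateModule (ℓ : ℕ) B ⧸ (tateMap (ℓ : ℕ) φ).range) _ _ _ hp).symm
        refine hδ1 p _ ((ℓ : ℕ) ^ v) ?_ ?_
        · exact Nat.Coprime.pow_left _ ((Nat.coprime_primes ℓ.2 p.2).2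
            fun e => hp (Subtype.ext e.symm))
        · obtain ⟨k, rfl⟩ := (Nat.modEq_zero_iff_dvd).1 hc2
          rw [← mul_smul, ← mul_assoc, mul_comm, mul_smul, hN, smul_zero]
end

section
/- Let ℓ be a prime, let A and B be abelian groups with A ℓ-divisible, and let φ : A → B be a surjective group homomorphism with finite kernel. Then the induced Q-linear map V_ℓφ : T_ℓA ⊗_Z Q → T_ℓB ⊗_Z Q, obtained from T_ℓφ by tensoring with Q, is an isomorphism. -/
/-- Multiplication by a nonzero integer is bijective on `M ⊗ ℚ`. -/
theorem nsmul_tensor_rat_bijective (M : Type*) [AddCommGroup M] (N : ℕ) (hN : N ≠ 0) :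
    Function.Bijective (fun x : TensorProduct ℤ M ℚ => N • x) := by
  have hq : (N : ℚ) ≠ 0 := by exact_mod_cast hN
  let g : ℚ →ₗ[ℤ] ℚ := (AddMonoidHom.mulLeft ((N : ℚ)⁻¹)).toIntLinearMap
  have key : ∀ x : TensorProduct ℤ M ℚ, N • (LinearMap.lTensor M g x) = x := by
    intro x
    induction x using TensorProduct.induction_on with
    | zero => simp
    | tmul m q =>
      rw [LinearMap.lTensor_tmul, ← TensorProduct.tmul_smul]
      congr 1
      simp [g, hq]
    | add x y hx hy => rw [map_add, smul_add, hx, hy]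
  refine ⟨fun x y hxy => ?_, fun x => ⟨_, key x⟩⟩
  have hxy' : N • x = N • y := hxy
  rw [← key x, ← key y, ← map_nsmul, ← map_nsmul, hxy']

/-- A map with a two-sided inverse up to multiplication by `N ≠ 0` is an isomorphism
after tensoring with `ℚ`. -/
theorem rTensor_rat_bijective_of_quasi_inverse {M M' : Type*} [AddCommGroup M] [AddCommGroup M']
    (f : M →ₗ[ℤ] M') (g : M' →ₗ[ℤ] M) (N : ℕ) (hN : N ≠ 0)
    (hgf : ∀ x, g (f x) = N • x) (hfg : ∀ y, f (g y) = N • y) :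
    Function.Bijective (LinearMap.rTensor (R := ℤ) ℚ f) := by
  have h1 : ∀ x, LinearMap.rTensor ℚ g (LinearMap.rTensor ℚ f x) = N • x := by
    intro x
    induction x using TensorProduct.induction_on with
    | zero => simp
    | tmul m q => simp only [LinearMap.rTensor_tmul, hgf, TensorProduct.smul_tmul']
    | add x y hx hy => simp only [map_add, smul_add, hx, hy]
  have h2 : ∀ x, LinearMap.rTensor ℚ f (LinearMap.rTensor ℚ g x) = N • x := by
    intro x
    induction x using TensorProduct.induction_on with
    | zero => simp
    | tmul m q => simp only [LinearMap.rTensor_tmul, hfg, TensorProduct.smul_tmul']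
    | add x y hx hy => simp only [map_add, smul_add, hx, hy]
  refine ⟨fun x y hxy => ?_, fun y => ?_⟩
  · apply (nsmul_tensor_rat_bijective M N hN).1
    show N • x = N • y
    rw [← h1, ← h1, hxy]
  · obtain ⟨z, hz⟩ := (nsmul_tensor_rat_bijective M' N hN).2 y
    exact ⟨LinearMap.rTensor ℚ g z, (h2 z).trans hz⟩

/-- Let `ℓ` be a prime, `A`, `B` abelian groups with `A` `ℓ`-divisible, and
`φ : A → B` a surjective homomorphism with finite kernel. Then the induced map
`V_ℓφ : T_ℓA ⊗_ℤ ℚ → T_ℓB ⊗_ℤ ℚ` is an isomorphism. -/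
theorem rationalTateMap_bijective (ℓ : ℕ) (hℓ : ℓ.Prime)
    (A B : Type*) [AddCommGroup A] [AddCommGroup B]
    (hdiv : ∀ a : A, ∃ b : A, ℓ • b = a)
    (φ : A →+ B) (hsurj : Function.Surjective φ) (hker : Finite φ.ker) :
    Function.Bijective
      (LinearMap.rTensor (R := ℤ) ℚ (tateMap ℓ φ).toIntLinearMap) := by
  have hN : Nat.card φ.ker ≠ 0 := Nat.card_ne_zero.mpr ⟨⟨0⟩, hker⟩
  -- the dual isogeny
  have hk : φ.ker ≤ (nsmulAddMonoidHom (α := A) (Nat.card φ.ker)).ker := by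
    intro a ha
    have h := card_nsmul_eq_zero' (x := (⟨a, ha⟩ : φ.ker))
    exact congrArg Subtype.val h
  let ψ : B →+ A := φ.liftOfSurjective hsurj ⟨nsmulAddMonoidHom (Nat.card φ.ker), hk⟩
  have hψ : ∀ a, ψ (φ a) = Nat.card φ.ker • a := fun a =>
    φ.liftOfRightInverse_comp_apply _ _ ⟨nsmulAddMonoidHom (Nat.card φ.ker), hk⟩ a
  have hφ : ∀ b, φ (ψ b) = Nat.card φ.ker • b := by
    intro b
    obtain ⟨a, rfl⟩ := hsurj b
    rw [hψ, map_nsmul]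
  refine rTensor_rat_bijective_of_quasi_inverse _ (tateMap ℓ ψ).toIntLinearMap _ hN ?_ ?_
  · intro P
    exact Subtype.ext (funext fun n => hψ (P.1 n))
  · intro Q
    exact Subtype.ext (funext fun n => hφ (Q.1 n))
end

section
/- Let ℓ be a prime, let A be an ℓ-divisible abelian group such that A[ℓ] is finite, and let t ≥ 0 be an integer. For a subgroup H of A[ℓ^t], let q_H : A → A/H be the quotient homomorphism, let V_ℓ(q_H) : T_ℓA ⊗_Z Q → T_ℓ(A/H) ⊗_Z Q be the induced isomorphism, regard T_ℓ(A/H) as a subgroup of T_ℓ(A/H) ⊗_Z Q via x ↦ x ⊗ 1 (this map is injective since Tate modules are torsion-free), and set Λ(H) := (V_ℓ q_H)^{-1}(T_ℓ(A/H)) ⊆ T_ℓA ⊗_Z Q. Then H ↦ Λ(H) is a bijection from the set of subgroups of A[ℓ^t] onto the set of subgroups L of T_ℓA ⊗_Z Q satisfying T_ℓA ⊆ L ⊆ ℓ^{-t}·T_ℓA, and moreover for subgroups H, H' of A[ℓ^t] one has H ⊆ H' if and only if Λ(H) ⊆ Λ(H'). -/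
/-- The additive map `M → M ⊗_ℤ ℚ`, `x ↦ x ⊗ c`. -/
noncomputable def tmulQ {M : Type*} [AddCommGroup M] (c : ℚ) : M →+ TensorProduct ℤ M ℚ where
  toFun x := x ⊗ₜ c
  map_zero' := TensorProduct.zero_tmul _ c
  map_add' x y := TensorProduct.add_tmul x y c

/-- The `m`-torsion subgroup `A[m]` of an abelian group `A`. -/
def torsionSub (m : ℕ) (A : Type*) [AddCommGroup A] : AddSubgroup A where
  carrier := {a | m • a = 0}
  zero_mem' := smul_zero m
  add_mem' := by
    rintro a b (ha : m • a = 0) (hb : m • b = 0)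
    show m • (a + b) = 0
    rw [smul_add, ha, hb, add_zero]
  neg_mem' := by
    rintro a (ha : m • a = 0)
    show m • (-a) = 0
    rw [smul_neg, ha, neg_zero]

/-- The lattice `Λ(H) := (V_ℓ q_H)⁻¹ (T_ℓ(A/H)) ⊆ T_ℓA ⊗_ℤ ℚ` attached to a subgroup
`H ≤ A`, where `q_H : A → A/H` is the quotient map and `T_ℓ(A/H)` is viewed inside
`T_ℓ(A/H) ⊗_ℤ ℚ` via `x ↦ x ⊗ 1`. -/
noncomputable def tateLattice (ℓ : ℕ) (A : Type*) [AddCommGroup A] (H : AddSubgroup A) :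
    AddSubgroup (TensorProduct ℤ (TateModule ℓ A) ℚ) :=
  AddSubgroup.comap
    (LinearMap.rTensor (R := ℤ) ℚ
      (tateMap ℓ (QuotientAddGroup.mk' H)).toIntLinearMap).toAddMonoidHom
    (tmulQ (M := TateModule ℓ (A ⧸ H)) 1).range

namespace TateAux

open TensorProduct

theorem pow_smul_apply {ℓ : ℕ} {B : Type*} [AddCommGroup B] (x : TateModule ℓ B) (k n : ℕ) :
    ℓ ^ k • x.1 (n + k) = x.1 n := by
  induction k with
  | zero => simp
  | succ k ih => rw [pow_succ, mul_smul, ← add_assoc, x.2.2, ih]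

theorem torsion_free {ℓ : ℕ} (hℓ : ℓ.Prime) {B : Type*} [AddCommGroup B] (x : TateModule ℓ B)
    (n : ℕ) (hn : n ≠ 0) (h : n • x = 0) : x = 0 := by
  obtain ⟨a, m, hm, rfl⟩ := Nat.exists_eq_pow_mul_and_not_dvd hn ℓ hℓ.ne_one
  refine Subtype.ext (funext fun k => ?_)
  change x.1 k = 0
  rw [← pow_smul_apply x a k]
  have h1 : (ℓ ^ a * m) • x.1 (k + a) = 0 := congrFun (congrArg Subtype.val h) (k + a)
  have h2 := x.2.1 (k + a)
  rw [← addOrderOf_dvd_iff_nsmul_eq_zero] at h1 h2 ⊢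
  refine Nat.Coprime.dvd_of_dvd_mul_right ?_ h1
  exact Nat.Coprime.coprime_dvd_left h2
    (Nat.Coprime.pow_left _ ((Nat.Prime.coprime_iff_not_dvd hℓ).2 hm))

theorem tmul_inj {ℓ : ℕ} (hℓ : ℓ.Prime) {B : Type*} [AddCommGroup B] (x : TateModule ℓ B)
    (h : x ⊗ₜ[ℤ] (1 : ℚ) = 0) : x = 0 := by
  have : Module.IsTorsionFree ℤ (TateModule ℓ B) := by
    refine Module.IsTorsionFree.of_smul_eq_zero fun n y hy => ?_
    by_cases hn : n = 0
    · exact Or.inl hn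
    · refine Or.inr (torsion_free hℓ y n.natAbs (by simpa using hn) ?_)
      rcases Int.natAbs_eq n with h' | h'
      · rw [h'] at hy; simpa using hy
      · rw [h'] at hy; simpa using hy
  have : Module.Flat ℤ (TateModule ℓ B) := inferInstance
  have inj := Module.Flat.lTensor_preserves_injective_linearMap (M := TateModule ℓ B)
    (Algebra.linearMap ℤ ℚ) (by intro a b h; simpa using h)
  have h0 : x ⊗ₜ[ℤ] (1 : ℤ) = 0 := by
    apply inj
    simpa using h
  have := congrArg (TensorProduct.rid ℤ (TateModule ℓ B)) h0
  simpa using this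

theorem smul_inv {ℓ : ℕ} (hℓ : ℓ.Prime) {B : Type*} [AddCommGroup B] (t : ℕ) (y : B) :
    (ℓ ^ t • y) ⊗ₜ[ℤ] (((ℓ : ℚ) ^ t)⁻¹) = y ⊗ₜ[ℤ] (1 : ℚ) := by
  have hne : ((ℓ : ℚ) ^ t) ≠ 0 := pow_ne_zero _ (by exact_mod_cast hℓ.ne_zero)
  rw [← natCast_zsmul, TensorProduct.smul_tmul, zsmul_eq_mul]
  congr 1
  push_cast
  field_simp

/-- Shift of a compatible sequence. -/
def shift {ℓ : ℕ} {B : Type*} [AddCommGroup B] (t : ℕ) (x : TateModule ℓ B)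
    (h : ℓ • x.1 t = 0) : TateModule ℓ B :=
  ⟨fun n => x.1 (n + t), fun n => by
      change ℓ ^ (n + 1) • x.1 (n + t) = 0
      rw [pow_succ', mul_smul, add_comm n t, pow_smul_apply, h],
    fun n => by
      change ℓ • x.1 (n + 1 + t) = x.1 (n + t)
      rw [show n + 1 + t = n + t + 1 by ring, x.2.2]⟩

theorem shift_smul {ℓ : ℕ} {B : Type*} [AddCommGroup B] (t : ℕ) (x : TateModule ℓ B)
    (h : ℓ • x.1 t = 0) : ℓ ^ t • shift t x h = x :=
  Subtype.ext (funext fun n => pow_smul_apply x t n)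

theorem surj {ℓ t : ℕ} {A : Type*} [AddCommGroup A]
    (hdiv : ∀ a : A, ∃ b : A, ℓ • b = a) (a : A) (ha : ℓ ^ t • a = 0) :
    ∃ x : TateModule ℓ A, ℓ • x.1 t = a := by
  choose f hf using hdiv
  have key : ∀ k, ℓ ^ k • (f^[k] a) = a := by
    intro k
    induction k with
    | zero => simp
    | succ k ih => rw [Function.iterate_succ_apply', pow_succ, mul_smul, hf, ih]
  refine ⟨⟨fun n => ℓ ^ t • f^[n + 1] a, fun n => ?_, fun n => ?_⟩, ?_⟩
  · rw [smul_comm, key, ha]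
  · rw [smul_comm, Function.iterate_succ_apply' f (n + 1), hf]
  · change ℓ • ℓ ^ t • f^[t + 1] a = a
    rw [← mul_smul, ← pow_succ', key]

theorem mem_iff {ℓ : ℕ} (hℓ : ℓ.Prime) {A : Type*} [AddCommGroup A] (t : ℕ)
    (H : AddSubgroup A) (x : TateModule ℓ A) :
    x ⊗ₜ[ℤ] (((ℓ : ℚ) ^ t)⁻¹) ∈ tateLattice ℓ A H ↔ ℓ • x.1 t ∈ H := by
  constructor
  · rintro ⟨y, hy⟩
    change y ⊗ₜ[ℤ] (1 : ℚ) =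
      (tateMap ℓ (QuotientAddGroup.mk' H) x) ⊗ₜ[ℤ] (((ℓ : ℚ) ^ t)⁻¹) at hy
    rw [← smul_inv hℓ t y, ← sub_eq_zero, ← TensorProduct.sub_tmul] at hy
    have h1 : ℓ ^ t • (ℓ ^ t • y - tateMap ℓ (QuotientAddGroup.mk' H) x) = 0 := by
      apply tmul_inj hℓ
      rw [← smul_inv hℓ t]
      have h5 : ∀ (k : ℤ) (z : TateModule ℓ (A ⧸ H)) (c : ℚ), z ⊗ₜ[ℤ] c = 0 →
          (k • z) ⊗ₜ[ℤ] c = 0 := fun k z c hz => by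
        rw [← TensorProduct.smul_tmul', hz, smul_zero]
      have h6 := h5 (ℓ ^ t : ℕ) _ _ (h5 (ℓ ^ t : ℕ) _ _ hy)
      rwa [natCast_zsmul, natCast_zsmul] at h6
    have h2 := torsion_free hℓ _ _ (pow_ne_zero t hℓ.ne_zero) h1
    have h3 := congrFun (congrArg Subtype.val (sub_eq_zero.1 h2)) t
    change ℓ ^ t • y.1 t = QuotientAddGroup.mk' H (x.1 t) at h3
    have h4 : QuotientAddGroup.mk' H (ℓ • x.1 t) = 0 := by
      rw [map_nsmul, ← h3, ← mul_smul, ← pow_succ', y.2.1]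
    exact (QuotientAddGroup.eq_zero_iff _).1 h4
  · intro h
    have h0 : ℓ • (tateMap ℓ (QuotientAddGroup.mk' H) x).1 t = 0 := by
      change ℓ • QuotientAddGroup.mk' H (x.1 t) = 0
      rw [← map_nsmul]
      exact (QuotientAddGroup.eq_zero_iff _).2 h
    refine ⟨shift t _ h0, ?_⟩
    change shift t _ h0 ⊗ₜ[ℤ] (1 : ℚ) =
      (tateMap ℓ (QuotientAddGroup.mk' H) x) ⊗ₜ[ℤ] (((ℓ : ℚ) ^ t)⁻¹)
    rw [← smul_inv hℓ t, shift_smul]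

theorem one_le {ℓ : ℕ} {A : Type*} [AddCommGroup A] (H : AddSubgroup A) :
    (tmulQ (M := TateModule ℓ A) 1).range ≤ tateLattice ℓ A H := by
  rintro _ ⟨x, rfl⟩
  exact ⟨tateMap ℓ (QuotientAddGroup.mk' H) x, rfl⟩

theorem le_inv {ℓ : ℕ} (hℓ : ℓ.Prime) {A : Type*} [AddCommGroup A] (t : ℕ)
    (H : AddSubgroup A) (hH : H ≤ torsionSub (ℓ ^ t) A) :
    tateLattice ℓ A H ≤ (tmulQ (M := TateModule ℓ A) (((ℓ : ℚ) ^ t)⁻¹)).range := by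
  rintro v ⟨y, hy⟩
  have hne : ((ℓ : ℚ) ^ t) ≠ 0 := pow_ne_zero _ (by exact_mod_cast hℓ.ne_zero)
  let ψ : A ⧸ H →+ A := QuotientAddGroup.lift H (nsmulAddMonoidHom (ℓ ^ t)) fun a ha => hH ha
  -- `F w` is `ℓ ^ (-t)` times the map induced by `ψ`
  let F : TensorProduct ℤ (TateModule ℓ (A ⧸ H)) ℚ →ₗ[ℤ] TensorProduct ℤ (TateModule ℓ A) ℚ :=
    TensorProduct.map (tateMap ℓ ψ).toIntLinearMap
      (LinearMap.mulLeft ℤ (((ℓ : ℚ) ^ t)⁻¹))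
  have hF : F ∘ₗ (LinearMap.rTensor (R := ℤ) ℚ
      (tateMap ℓ (QuotientAddGroup.mk' H)).toIntLinearMap) = LinearMap.id := by
    refine TensorProduct.ext' fun x c => ?_
    change (tateMap ℓ ψ (tateMap ℓ (QuotientAddGroup.mk' H) x)) ⊗ₜ[ℤ] (((ℓ : ℚ) ^ t)⁻¹ * c)
      = x ⊗ₜ[ℤ] c
    have : tateMap ℓ ψ (tateMap ℓ (QuotientAddGroup.mk' H) x) = ℓ ^ t • x := rfl
    rw [this, ← natCast_zsmul, TensorProduct.smul_tmul, zsmul_eq_mul]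
    congr 1
    push_cast
    field_simp
  refine ⟨tateMap ℓ ψ y, ?_⟩
  have h1 := congrArg F hy
  have h2 := LinearMap.congr_fun hF v
  refine Eq.trans ?_ (h1.trans h2)
  change _ ⊗ₜ[ℤ] _ = _ ⊗ₜ[ℤ] (((ℓ : ℚ) ^ t)⁻¹ * 1)
  rw [mul_one]
  rfl

/-- The projection of the Tate module to the `ℓ ^ t`-torsion. -/
def proj (ℓ t : ℕ) (A : Type*) [AddCommGroup A] : TateModule ℓ A →+ A where
  toFun x := ℓ • x.1 t
  map_zero' := smul_zero _
  map_add' x y := smul_add _ _ _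

end TateAux

/-- Let `A` be an `ℓ`-divisible abelian group with `A[ℓ]` finite and let
`t ≥ 0`. Then `H ↦ Λ(H)` is a bijection from the set of subgroups of `A[ℓ^t]` onto the set
of subgroups `L` of `T_ℓA ⊗_ℤ ℚ` with `T_ℓA ⊆ L ⊆ ℓ^{-t}·T_ℓA`, and for subgroups
`H, H' ≤ A[ℓ^t]` one has `H ⊆ H'` iff `Λ(H) ⊆ Λ(H')`. -/
theorem tateLattice_bijection (ℓ t : ℕ) (hℓ : ℓ.Prime)
    (A : Type*) [AddCommGroup A]
    (hdiv : ∀ a : A, ∃ b : A, ℓ • b = a) (hfin : Finite (torsionSub ℓ A)) :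
    Set.BijOn (tateLattice ℓ A)
      {H : AddSubgroup A | H ≤ torsionSub (ℓ ^ t) A}
      {L : AddSubgroup (TensorProduct ℤ (TateModule ℓ A) ℚ) |
        (tmulQ (M := TateModule ℓ A) 1).range ≤ L ∧
        L ≤ (tmulQ (M := TateModule ℓ A) (((ℓ : ℚ) ^ t)⁻¹)).range} ∧
    ∀ H H' : AddSubgroup A, H ≤ torsionSub (ℓ ^ t) A → H' ≤ torsionSub (ℓ ^ t) A →
      (H ≤ H' ↔ tateLattice ℓ A H ≤ tateLattice ℓ A H') := by
  have ord : ∀ H H' : AddSubgroup A, H ≤ torsionSub (ℓ ^ t) A → H' ≤ torsionSub (ℓ ^ t) A →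
      (H ≤ H' ↔ tateLattice ℓ A H ≤ tateLattice ℓ A H') := by
    intro H H' hH hH'
    constructor
    · intro h v hv
      obtain ⟨x, rfl⟩ := TateAux.le_inv hℓ t H hH hv
      exact (TateAux.mem_iff hℓ t H' x).2 (h ((TateAux.mem_iff hℓ t H x).1 hv))
    · intro h a ha
      obtain ⟨x, rfl⟩ := TateAux.surj (t := t) hdiv a (hH ha)
      exact (TateAux.mem_iff hℓ t H' x).1 (h ((TateAux.mem_iff hℓ t H x).2 ha))
  refine ⟨⟨fun H hH => ⟨TateAux.one_le H, TateAux.le_inv hℓ t H hH⟩, ?_, ?_⟩, ord⟩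
  · intro H hH H' hH' h
    exact le_antisymm ((ord H H' hH hH').2 h.le) ((ord H' H hH' hH).2 h.ge)
  · rintro L ⟨hL1, hL2⟩
    let H : AddSubgroup A := AddSubgroup.map (TateAux.proj ℓ t A)
      (AddSubgroup.comap (tmulQ (M := TateModule ℓ A) (((ℓ : ℚ) ^ t)⁻¹)) L)
    have hH : H ≤ torsionSub (ℓ ^ t) A := by
      rintro _ ⟨x, _, rfl⟩
      change ℓ ^ t • ℓ • x.1 t = 0
      rw [← mul_smul, ← pow_succ, x.2.1]
    refine ⟨H, hH, le_antisymm ?_ ?_⟩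
    · intro v hv
      obtain ⟨x, rfl⟩ := TateAux.le_inv hℓ t H hH hv
      obtain ⟨x', hx', he⟩ := (TateAux.mem_iff hℓ t H x).1 hv
      have he' : TateAux.proj ℓ t A (x - x') = 0 := by
        rw [map_sub, he]
        exact sub_self _
      have he2 : ℓ • (x - x').1 t = 0 := he'
      have h3 : tmulQ (M := TateModule ℓ A) (((ℓ : ℚ) ^ t)⁻¹) (x - x') ∈ L := by
        refine hL1 ⟨TateAux.shift t (x - x') he2, ?_⟩
        refine (TateAux.smul_inv hℓ t _).symm.trans ?_
        rw [TateAux.shift_smul]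
        rfl
      have h4 := L.add_mem h3 hx'
      rwa [← map_add, sub_add_cancel] at h4
    · intro v hv
      obtain ⟨x, rfl⟩ := hL2 hv
      exact (TateAux.mem_iff hℓ t H x).2 ⟨x, hv, rfl⟩
end

section
/- Let ℓ be a prime, let d ∈ Z_ℓ^×, and let b_1, b_2, w_1, w_2, x_1, x_2, y_1, y_2, z_1, z_2 ∈ Z_ℓ. Let X ∈ M_4(Q_ℓ) be the block-diagonal matrix with 2×2 diagonal blocks A_i having rows (1 + x_iℓ, b_i + y_iℓ) and (w_iℓ, d + z_iℓ) for i = 1, 2, and let M_q ∈ M_4(Q_ℓ) be the matrix with rows (1, 0, 1/ℓ, 0), (0, 1, 0, 0), (0, 0, 1/ℓ, 0), (0, 0, 0, 1). Then M_q is invertible and M_q^{-1}·X·M_q equals the matrix with rows (1+x_1ℓ, b_1+y_1ℓ, x_1−x_2, −b_2−y_2ℓ), (w_1ℓ, d+z_1ℓ, w_1, 0), (0, 0, 1+x_2ℓ, b_2ℓ+y_2ℓ²), (0, 0, w_2, d+z_2ℓ); in particular, all entries of M_q^{-1}·X·M_q lie in Z_ℓ. -/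
open Matrix

/-- Conjugating the block-diagonal matrix `X` (with blocks
`!![1 + xᵢℓ, bᵢ + yᵢℓ; wᵢℓ, d + zᵢℓ]`, `d ∈ ℤ_ℓ^×`) by the change-of-basis matrix
`M_q = !![1,0,1/ℓ,0; 0,1,0,0; 0,0,1/ℓ,0; 0,0,0,1]` gives
`M_q⁻¹ X M_q = !![1+x₁ℓ, b₁+y₁ℓ, x₁-x₂, -b₂-y₂ℓ; w₁ℓ, d+z₁ℓ, w₁, 0;`
`0, 0, 1+x₂ℓ, b₂ℓ+y₂ℓ²; 0, 0, w₂, d+z₂ℓ]`, whose entries all lie in `ℤ_ℓ`;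
moreover `M_q` is invertible. -/
theorem conjugation_by_Mq (p : ℕ) [Fact p.Prime]
    (d b₁ b₂ w₁ w₂ x₁ x₂ y₁ y₂ z₁ z₂ : ℤ_[p]) (hd : IsUnit d) :
    IsUnit (!![(1 : ℚ_[p]), 0, (p : ℚ_[p])⁻¹, 0;
               0, 1, 0, 0;
               0, 0, (p : ℚ_[p])⁻¹, 0;
               0, 0, 0, 1] : Matrix (Fin 4) (Fin 4) ℚ_[p]).det ∧
    (!![(1 : ℚ_[p]), 0, (p : ℚ_[p])⁻¹, 0;
        0, 1, 0, 0;
        0, 0, (p : ℚ_[p])⁻¹, 0;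
        0, 0, 0, 1] : Matrix (Fin 4) (Fin 4) ℚ_[p])⁻¹ *
      ((!![1 + x₁ * p, b₁ + y₁ * p, 0, 0;
           w₁ * p, d + z₁ * p, 0, 0;
           0, 0, 1 + x₂ * p, b₂ + y₂ * p;
           0, 0, w₂ * p, d + z₂ * p] : Matrix (Fin 4) (Fin 4) ℤ_[p]).map
        ((↑·) : ℤ_[p] → ℚ_[p])) *
      (!![(1 : ℚ_[p]), 0, (p : ℚ_[p])⁻¹, 0;
          0, 1, 0, 0;
          0, 0, (p : ℚ_[p])⁻¹, 0;
          0, 0, 0, 1] : Matrix (Fin 4) (Fin 4) ℚ_[p]) =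
      (!![1 + x₁ * p, b₁ + y₁ * p, x₁ - x₂, -b₂ - y₂ * p;
          w₁ * p, d + z₁ * p, w₁, 0;
          0, 0, 1 + x₂ * p, b₂ * p + y₂ * p ^ 2;
          0, 0, w₂, d + z₂ * p] : Matrix (Fin 4) (Fin 4) ℤ_[p]).map
        ((↑·) : ℤ_[p] → ℚ_[p]) := by
  have hp : (p : ℚ_[p]) ≠ 0 := Nat.cast_ne_zero.mpr (Fact.out : p.Prime).ne_zero
  have hdet : IsUnit (!![(1 : ℚ_[p]), 0, (p : ℚ_[p])⁻¹, 0;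
               0, 1, 0, 0;
               0, 0, (p : ℚ_[p])⁻¹, 0;
               0, 0, 0, 1] : Matrix (Fin 4) (Fin 4) ℚ_[p]).det := by
    rw [isUnit_iff_ne_zero]
    simp [Matrix.det_succ_row_zero, Fin.sum_univ_succ, Fin.succAbove, hp]
  refine ⟨hdet, ?_⟩
  rw [Matrix.mul_assoc]
  refine (congrArg _ ?_).trans (Matrix.nonsing_inv_mul_cancel_left _ _ hdet)
  ext i j
  fin_cases i <;> fin_cases j <;>
    simp [Matrix.mul_apply, Fin.sum_univ_succ] <;> field_simp <;> ring
end

section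
/- Let A_0 be a divisible abelian group such that the n-torsion subgroup A_0[n] is finite for every positive integer n. Define the adelic Tate module T̂A_0 as the subgroup of ∏_{n≥1} A_0[n] consisting of sequences (P_n)_{n≥1} with (n/m)·P_n = P_m whenever m divides n, and set V̂A_0 := T̂A_0 ⊗_Z Q, regarding T̂A_0 as a subgroup of V̂A_0 via x ↦ x ⊗ 1 (this map is injective since T̂A_0 is torsion-free). Let C be the category whose objects are pairs (B, φ) with B an abelian group and φ : A_0 → B a surjective group homomorphism with finite kernel, and whose morphisms (B, φ) → (B', φ') are the group homomorphisms ψ : B → B' with ψ ∘ φ = φ'. Let D be the category whose objects are the subgroups L of V̂A_0 with T̂A_0 ⊆ L and L/T̂A_0 finite, and whose morphisms are the inclusions. Then: (i) for each object (B, φ) of C, the induced map V̂φ : V̂A_0 → V̂B is an isomorphism and Λφ := (V̂φ)^{-1}(T̂B) is an object of D; (ii) the assignment (B, φ) ↦ Λφ, sending a morphism ψ to the corresponding inclusion Λφ ⊆ Λφ', is a functor C → D; and (iii) this functor is an equivalence of categories. -/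
/-- The adelic Tate module of an abelian group `A`: coherent sequences `(P_n)_{n ≥ 1}` with
`P n ∈ A[n]` and `(n / m) • P n = P m` whenever `m ∣ n` (the `0`-th component is
irrelevant and normalized to `0`). -/
def AdelicTate (A : Type*) [AddCommGroup A] : AddSubgroup (ℕ → A) where
  carrier := {P | P 0 = 0 ∧ (∀ n, n • P n = 0) ∧
    ∀ m n : ℕ, 0 < m → 0 < n → m ∣ n → (n / m) • P n = P m}
  zero_mem' := ⟨rfl, fun _ => smul_zero _, fun m n _ _ _ => smul_zero _⟩
  add_mem' := by
    rintro P Q ⟨hP0, hP1, hP2⟩ ⟨hQ0, hQ1, hQ2⟩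
    refine ⟨?_, fun n => ?_, fun m n hm hn hmn => ?_⟩
    · show P 0 + Q 0 = 0
      rw [hP0, hQ0, add_zero]
    · show n • (P n + Q n) = 0
      rw [smul_add, hP1 n, hQ1 n, add_zero]
    · show (n / m) • (P n + Q n) = P m + Q m
      rw [smul_add, hP2 m n hm hn hmn, hQ2 m n hm hn hmn]
  neg_mem' := by
    rintro P ⟨hP0, hP1, hP2⟩
    refine ⟨?_, fun n => ?_, fun m n hm hn hmn => ?_⟩
    · show -(P 0) = 0
      rw [hP0, neg_zero]
    · show n • (-(P n)) = 0
      rw [smul_neg, hP1 n, neg_zero]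
    · show (n / m) • (-(P n)) = -(P m)
      rw [smul_neg, hP2 m n hm hn hmn]

/-- The map induced on adelic Tate modules by a group homomorphism, applied
componentwise. -/
def adelicMap {A B : Type*} [AddCommGroup A] [AddCommGroup B] (φ : A →+ B) :
    AdelicTate A →+ AdelicTate B where
  toFun P := ⟨fun n => φ (P.1 n), by
    obtain ⟨h0, h1, h2⟩ := P.2
    exact ⟨by show φ (P.1 0) = 0; rw [h0, map_zero], fun n => by rw [← map_nsmul, h1 n, map_zero],
      fun m n hm hn hmn => by rw [← map_nsmul, h2 m n hm hn hmn]⟩⟩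
  map_zero' := Subtype.ext (funext fun _ => map_zero φ)
  map_add' P Q := Subtype.ext (funext fun _ => map_add φ _ _)

/-- The category of "isogenous quotients" of a fixed abelian group `A₀`: objects are pairs
`(B, φ)` with `φ : A₀ → B` a surjective homomorphism with finite kernel. -/
structure IsogenousQuotient (A₀ : Type) [AddCommGroup A₀] : Type 1 where
  carrier : Type
  [addCommGroup : AddCommGroup carrier]
  hom : A₀ →+ carrier
  surjective : Function.Surjective hom
  finiteKernel : Finite hom.ker

attribute [instance] IsogenousQuotient.addCommGroup

open CategoryTheory

/-- Morphisms `(B, φ) → (B', φ')` are homomorphisms `ψ : B → B'` with `ψ ∘ φ = φ'`. -/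
instance IsogenousQuotient.category (A₀ : Type) [AddCommGroup A₀] :
    Category (IsogenousQuotient A₀) where
  Hom X Y := {ψ : X.carrier →+ Y.carrier // ψ.comp X.hom = Y.hom}
  id X := ⟨AddMonoidHom.id _, AddMonoidHom.id_comp _⟩
  comp f g := ⟨g.1.comp f.1, by rw [AddMonoidHom.comp_assoc, f.2]; exact g.2⟩
  id_comp f := Subtype.ext (AddMonoidHom.comp_id _)
  comp_id f := Subtype.ext (AddMonoidHom.id_comp _)
  assoc f g h := Subtype.ext (AddMonoidHom.comp_assoc _ _ _).symm

/-- The category of lattices in `V̂A₀ = T̂A₀ ⊗_ℤ ℚ` containing `T̂A₀` with finite quotient;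
morphisms are inclusions (it is a preorder category). -/
abbrev AdelicLattice (A₀ : Type) [AddCommGroup A₀] : Type :=
  {L : AddSubgroup (TensorProduct ℤ (AdelicTate A₀) ℚ) //
    (tmulQ (M := AdelicTate A₀) 1).range ≤ L ∧
    Finite (L ⧸ ((tmulQ (M := AdelicTate A₀) 1).range.addSubgroupOf L))}

/-- The lattice `Λφ := (V̂φ)⁻¹(T̂B) ⊆ V̂A₀` attached to a surjection `φ : A₀ → B` with
finite kernel, where `T̂B` is viewed inside `V̂B = T̂B ⊗_ℤ ℚ` via `x ↦ x ⊗ 1`. -/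
noncomputable def LambdaObj (A₀ : Type) [AddCommGroup A₀] (X : IsogenousQuotient A₀) :
    AddSubgroup (TensorProduct ℤ (AdelicTate A₀) ℚ) :=
  AddSubgroup.comap
    (LinearMap.rTensor (R := ℤ) ℚ (adelicMap X.hom).toIntLinearMap).toAddMonoidHom
    (tmulQ (M := AdelicTate X.carrier) 1).range

open scoped TensorProduct

/-- Value of `q.num • P_{q.den}` computed from any representation `q = r / n`. -/
lemma tate_eval_eq {A : Type*} [AddCommGroup A] (P : AdelicTate A) (q : ℚ) (r : ℤ) (n : ℕ)
    (hn : 0 < n) (h : q * n = r) : q.num • P.1 q.den = r • P.1 n := by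
  obtain ⟨h0, h1, h2⟩ := P.2
  have hn' : (n : ℤ) ≠ 0 := by exact_mod_cast hn.ne'
  have hq : q = Rat.divInt r n := by
    rw [Rat.divInt_eq_div, ← h]
    have : (n : ℚ) ≠ 0 := by exact_mod_cast hn.ne'
    push_cast
    field_simp
  obtain ⟨k, hk⟩ : q.den ∣ n := by
    have := Rat.den_dvd r n
    rw [← hq] at this
    exact_mod_cast this
  have hk0 : 0 < k := by
    rcases Nat.eq_zero_or_pos k with rfl | h'
    · simp at hk; omega
    · exact h'
  have hr : r = q.num * k := by
    have h3 : (r : ℚ) = ((q.num * k : ℤ) : ℚ) := by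
      rw [← h, hk]
      push_cast
      rw [← mul_assoc, Rat.mul_den_eq_num]
    exact_mod_cast h3
  have h3 := h2 q.den n q.den_pos hn ⟨k, hk⟩
  rw [show n / q.den = k by rw [hk]; exact Nat.mul_div_cancel_left k q.den_pos] at h3
  rw [← h3, hr, mul_smul, natCast_zsmul]

/-- The evaluation pairing. -/
noncomputable def tateBil (A : Type*) [AddCommGroup A] : AdelicTate A →+ ℚ →+ A where
  toFun P :=
    { toFun := fun q => q.num • P.1 q.den
      map_zero' := by simp
      map_add' := fun p q => by
        rw [tate_eval_eq P (p + q) (p.num * q.den + q.num * p.den) (p.den * q.den)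
            (Nat.mul_pos p.den_pos q.den_pos) ?_,
          tate_eval_eq P p (p.num * q.den) (p.den * q.den)
            (Nat.mul_pos p.den_pos q.den_pos) ?_,
          tate_eval_eq P q (q.num * p.den) (p.den * q.den)
            (Nat.mul_pos p.den_pos q.den_pos) ?_, add_smul]
        all_goals
          push_cast
          have h1 := Rat.mul_den_eq_num p
          have h2 := Rat.mul_den_eq_num q
          first
            | linear_combination (p.den : ℚ) * h2
            | linear_combination (q.den : ℚ) * h1
            | linear_combination (q.den : ℚ) * h1 + (p.den : ℚ) * h2 }
  map_zero' := by
    ext q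
    exact smul_zero _
  map_add' P Q := by
    ext q
    exact smul_add _ _ _

/-- The evaluation map `V̂A → A`, `P ⊗ (r/n) ↦ r • P_n`. -/
noncomputable def tateEval (A : Type*) [AddCommGroup A] :
    TensorProduct ℤ (AdelicTate A) ℚ →+ A :=
  TensorProduct.liftAddHom (tateBil A) (fun r P q => by
    rw [map_zsmul, AddMonoidHom.zsmul_apply, map_zsmul])

lemma tateEval_tmul {A : Type*} [AddCommGroup A] (P : AdelicTate A) (q : ℚ) :
    tateEval A (P ⊗ₜ q) = q.num • P.1 q.den := rfl

lemma tateEval_tmul_inv {A : Type*} [AddCommGroup A] (P : AdelicTate A) (n : ℕ) (hn : 0 < n) :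
    tateEval A (P ⊗ₜ (n : ℚ)⁻¹) = P.1 n := by
  rw [tateEval_tmul, tate_eval_eq P _ 1 n hn, one_smul]
  have : (n : ℚ) ≠ 0 := by exact_mod_cast hn.ne'
  rw [inv_mul_cancel₀ this]; simp

lemma tensorQ_smul {M : Type*} [AddCommGroup M] (x : M) (r : ℤ) (q : ℚ) :
    (x ⊗ₜ[ℤ] (r * q : ℚ)) = (r • x) ⊗ₜ[ℤ] q := by
  rw [TensorProduct.smul_tmul, zsmul_eq_mul]

lemma tensorQ_rep {M : Type*} [AddCommGroup M] (v : TensorProduct ℤ M ℚ) :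
    ∃ (x : M) (n : ℕ), 0 < n ∧ v = x ⊗ₜ[ℤ] (n : ℚ)⁻¹ := by
  induction v using TensorProduct.induction_on with
  | zero => exact ⟨0, 1, one_pos, by simp⟩
  | tmul x q =>
    refine ⟨q.num • x, q.den, q.den_pos, ?_⟩
    rw [← tensorQ_smul, ← div_eq_mul_inv, Rat.num_div_den]
  | add u v hu hv =>
    obtain ⟨x, n, hn, rfl⟩ := hu
    obtain ⟨y, m, hm, rfl⟩ := hv
    refine ⟨(m : ℤ) • x + (n : ℤ) • y, n * m, Nat.mul_pos hn hm, ?_⟩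
    have hn' : (n : ℚ) ≠ 0 := by exact_mod_cast hn.ne'
    have hm' : (m : ℚ) ≠ 0 := by exact_mod_cast hm.ne'
    rw [TensorProduct.add_tmul, ← tensorQ_smul, ← tensorQ_smul]
    congr 2 <;> push_cast <;> field_simp

lemma tateEval_ker (A : Type*) [AddCommGroup A] :
    (tateEval A).ker = (tmulQ (M := AdelicTate A) 1).range := by
  ext v
  constructor
  · intro hv
    obtain ⟨P, n, hn, rfl⟩ := tensorQ_rep v
    rw [AddMonoidHom.mem_ker, tateEval_tmul_inv P n hn] at hv
    obtain ⟨h0, h1, h2⟩ := P.2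
    have key : ∀ m, 0 < m → m • P.1 (n * m) = P.1 n := fun m hm => by
      have := h2 n (n * m) hn (Nat.mul_pos hn hm) ⟨m, rfl⟩
      rwa [Nat.mul_div_cancel_left m hn] at this
    let Q : AdelicTate A := ⟨fun m => P.1 (n * m), by
      refine ⟨by simpa using h0, fun m => ?_, fun m k hm hk hmk => ?_⟩
      · rcases Nat.eq_zero_or_pos m with rfl | hm
        · simp
        · exact (key m hm).trans hv
      · have := h2 (n * m) (n * k) (Nat.mul_pos hn hm) (Nat.mul_pos hn hk)
          (Nat.mul_dvd_mul_left n hmk)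
        rwa [Nat.mul_div_mul_left _ _ hn] at this⟩
    have hPQ : P = (n : ℤ) • Q := by
      apply Subtype.ext
      funext m
      show P.1 m = (n : ℤ) • P.1 (n * m)
      rw [natCast_zsmul]
      rcases Nat.eq_zero_or_pos m with rfl | hm
      · simp [h0]
      · have := h2 m (n * m) hm (Nat.mul_pos hn hm) ⟨n, mul_comm _ _⟩
        rw [Nat.mul_div_cancel _ hm] at this
        exact this.symm
    refine ⟨Q, ?_⟩
    show Q ⊗ₜ[ℤ] (1 : ℚ) = _
    have hn' : (n : ℚ) ≠ 0 := by exact_mod_cast hn.ne'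
    rw [hPQ, ← tensorQ_smul]
    congr 1
    push_cast
    field_simp
  · rintro ⟨Q, rfl⟩
    obtain ⟨h0, h1, h2⟩ := Q.2
    show tateEval A (Q ⊗ₜ[ℤ] (1 : ℚ)) = 0
    rw [tateEval_tmul]
    simpa using h1 1

lemma tateEval_natural {A B : Type*} [AddCommGroup A] [AddCommGroup B] (φ : A →+ B)
    (v : TensorProduct ℤ (AdelicTate A) ℚ) :
    tateEval B (LinearMap.rTensor (R := ℤ) ℚ (adelicMap φ).toIntLinearMap v)
      = φ (tateEval A v) := by
  obtain ⟨P, n, hn, rfl⟩ := tensorQ_rep v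
  rw [LinearMap.rTensor_tmul, tateEval_tmul_inv _ _ hn, tateEval_tmul_inv _ _ hn]
  rfl

lemma tateEval_surj {A : Type*} [AddCommGroup A]
    (hdiv : ∀ (a : A) (n : ℕ), 0 < n → ∃ b : A, n • b = a) (a : A) (N : ℕ) (hN : 0 < N)
    (ha : N • a = 0) : ∃ v, tateEval A v = a := by
  choose f hf using hdiv
  let c : ℕ → A := fun k => Nat.rec a (fun k x => f x (k + 1) k.succ_pos) k
  have hc0 : c 0 = a := rfl
  have hc : ∀ k, (k + 1) • c (k + 1) = c k := fun k => hf _ _ _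
  have hcc : ∀ m j, ((m + j).factorial / m.factorial) • c (m + j) = c m := by
    intro m j
    induction j with
    | zero => simp [Nat.div_self (Nat.factorial_pos m)]
    | succ j ih =>
      rw [← ih, ← hc (m + j), smul_smul, ← add_assoc, Nat.factorial_succ]
      congr 1
      rw [Nat.mul_div_assoc _ (Nat.factorial_dvd_factorial (Nat.le_add_right m j)), mul_comm]
  have hca : ∀ k, k.factorial • c k = a := fun k => by
    have := hcc 0 k
    rw [← hc0, ← this]
    simp
  have hP : ∀ n, 0 < n → n * (n - 1).factorial = n.factorial := fun n hn =>
    Nat.mul_factorial_pred hn.ne'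
  let P : AdelicTate A := ⟨fun n => if n = 0 then 0 else (N * (n - 1).factorial) • c n, by
    refine ⟨by simp, fun n => ?_, fun m n hm hn hmn => ?_⟩
    · rcases Nat.eq_zero_or_pos n with rfl | hn
      · simp
      · simp only [hn.ne', if_false]
        rw [smul_smul, show n * (N * (n - 1).factorial) = N * (n * (n - 1).factorial) by ring,
          hP n hn, mul_smul, hca, ha]
    · simp only [hn.ne', hm.ne', if_false]
      obtain ⟨j, rfl⟩ := Nat.exists_eq_add_of_le (Nat.le_of_dvd hn hmn)
      rw [← hcc m j, smul_smul, smul_smul]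
      congr 1
      obtain ⟨d, hd⟩ := hmn
      obtain ⟨t, ht⟩ := Nat.factorial_dvd_factorial (Nat.le_add_right m j)
      have h1 := hP m hm
      have h2 := hP (m + j) hn
      rw [ht, Nat.mul_div_cancel_left _ (Nat.factorial_pos m), hd,
        Nat.mul_div_cancel_left _ hm, ← hd]
      rw [ht, ← h1] at h2
      apply Nat.eq_of_mul_eq_mul_left hm
      calc m * (d * (N * (m + j - 1).factorial))
          = N * ((m * d) * (m + j - 1).factorial) := by ring
        _ = N * (m * (m - 1).factorial * t) := by rw [← hd, h2]
        _ = _ := by ring⟩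
  refine ⟨P ⊗ₜ (N : ℚ)⁻¹, ?_⟩
  rw [tateEval_tmul_inv _ _ hN]
  show (if N = 0 then 0 else (N * (N - 1).factorial) • c N) = a
  rw [if_neg hN.ne', hP N hN, hca]

lemma ker_torsion {A B : Type*} [AddCommGroup A] [AddCommGroup B] (φ : A →+ B)
    (hK : Finite φ.ker) : ∃ N : ℕ, 0 < N ∧ ∀ a, φ a = 0 → N • a = 0 := by
  refine ⟨Nat.card φ.ker, Nat.card_pos, fun a ha => ?_⟩
  have h : Nat.card φ.ker • (⟨a, ha⟩ : φ.ker) = 0 := card_nsmul_eq_zero'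
  exact congrArg Subtype.val h

lemma Vmap_bijective {A B : Type*} [AddCommGroup A] [AddCommGroup B] (φ : A →+ B)
    (hs : Function.Surjective φ) (hK : Finite φ.ker) :
    Function.Bijective (LinearMap.rTensor (R := ℤ) ℚ (adelicMap φ).toIntLinearMap) := by
  obtain ⟨N, hN, hker⟩ := ker_torsion φ hK
  constructor
  · apply Module.Flat.rTensor_preserves_injective_linearMap
    show Function.Injective (adelicMap φ)
    rw [injective_iff_map_eq_zero]
    intro P hP
    obtain ⟨h0, h1, h2⟩ := P.2
    have hz : ∀ n, φ (P.1 n) = 0 := fun n => congrFun (congrArg Subtype.val hP) n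
    apply Subtype.ext
    funext n
    show P.1 n = 0
    rcases Nat.eq_zero_or_pos n with rfl | hn
    · exact h0
    · have := h2 n (N * n) hn (Nat.mul_pos hN hn) ⟨N, mul_comm _ _⟩
      rw [Nat.mul_div_cancel _ hn] at this
      rw [← this]
      exact hker _ (hz _)
  · intro v
    obtain ⟨Q, n, hn, rfl⟩ := tensorQ_rep v
    obtain ⟨h0, h1, h2⟩ := Q.2
    choose g hg using hs
    let R : AdelicTate A := ⟨fun m => N • g (Q.1 m), by
      refine ⟨?_, fun m => ?_, fun m k hm hk hmk => ?_⟩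
      · exact hker _ (by rw [hg, h0])
      · rw [smul_comm]
        exact (smul_smul _ _ _).trans (by
          rw [mul_comm, ← smul_smul] 
          rw [smul_comm]
          exact hker _ (by rw [map_nsmul, hg, h1]))
      · rw [smul_comm, ← sub_eq_zero, ← smul_sub]
        exact hker _ (by rw [map_sub, map_nsmul, hg, hg, h2 m k hm hk hmk, sub_self])⟩
    have hR : adelicMap φ R = (N : ℤ) • Q := by
      apply Subtype.ext
      funext m
      show φ (N • g (Q.1 m)) = (N : ℤ) • Q.1 m
      rw [map_nsmul, hg, natCast_zsmul]
    refine ⟨R ⊗ₜ[ℤ] ((N : ℚ)⁻¹ * (n : ℚ)⁻¹), ?_⟩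
    rw [LinearMap.rTensor_tmul]
    show adelicMap φ R ⊗ₜ[ℤ] _ = _
    have hN' : (N : ℚ) ≠ 0 := by exact_mod_cast hN.ne'
    rw [hR, ← tensorQ_smul]
    congr 1
    push_cast
    rw [← mul_assoc, mul_inv_cancel₀ hN', one_mul]

lemma mem_LambdaObj (A₀ : Type) [AddCommGroup A₀] (X : IsogenousQuotient A₀)
    (v : TensorProduct ℤ (AdelicTate A₀) ℚ) :
    v ∈ LambdaObj A₀ X ↔ X.hom (tateEval A₀ v) = 0 := by
  rw [← tateEval_natural, ← AddMonoidHom.mem_ker, tateEval_ker]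
  rfl

lemma LambdaObj_ge (A₀ : Type) [AddCommGroup A₀] (X : IsogenousQuotient A₀) :
    (tmulQ (M := AdelicTate A₀) 1).range ≤ LambdaObj A₀ X := by
  rw [← tateEval_ker]
  intro v hv
  rw [mem_LambdaObj, AddMonoidHom.mem_ker.1 hv, map_zero]

lemma LambdaObj_finite (A₀ : Type) [AddCommGroup A₀] (X : IsogenousQuotient A₀) :
    Finite ((LambdaObj A₀ X) ⧸
        ((tmulQ (M := AdelicTate A₀) 1).range.addSubgroupOf (LambdaObj A₀ X))) := by
  have := X.finiteKernel
  let g : LambdaObj A₀ X →+ X.hom.ker :=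
    ((tateEval A₀).comp (LambdaObj A₀ X).subtype).codRestrict X.hom.ker
      (fun v => (mem_LambdaObj A₀ X v.1).1 v.2)
  have hg : g.ker = (tmulQ (M := AdelicTate A₀) 1).range.addSubgroupOf (LambdaObj A₀ X) := by
    ext v
    rw [AddSubgroup.mem_addSubgroupOf, ← tateEval_ker, AddMonoidHom.mem_ker, AddMonoidHom.mem_ker]
    exact Subtype.ext_iff
  rw [← hg]
  exact Finite.of_injective _ (QuotientAddGroup.kerLift_injective g)

lemma map_eval_finite (A₀ : Type) [AddCommGroup A₀] (L : AdelicLattice A₀) :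
    Finite (L.1.map (tateEval A₀)) := by
  obtain ⟨L, hL1, hL2⟩ := L
  let g : L →+ A₀ := (tateEval A₀).comp L.subtype
  have hg : g.ker = (tmulQ (M := AdelicTate A₀) 1).range.addSubgroupOf L := by
    ext v
    rw [AddSubgroup.mem_addSubgroupOf, ← tateEval_ker, AddMonoidHom.mem_ker, AddMonoidHom.mem_ker]
    rfl
  have h1 : Finite (L ⧸ g.ker) := by rw [hg]; exact hL2
  have h2 : Finite g.range :=
    Finite.of_equiv _ (QuotientAddGroup.quotientKerEquivRange g).toEquiv
  have h3 : g.range = L.map (tateEval A₀) := by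
    ext a
    constructor
    · rintro ⟨v, rfl⟩
      exact ⟨v.1, v.2, rfl⟩
    · rintro ⟨v, hv, rfl⟩
      exact ⟨⟨v, hv⟩, rfl⟩
  show Finite (L.map (tateEval A₀))
  rw [← h3]
  exact h2

/-- The functor `Λ`. -/
noncomputable def LambdaFunctor (A₀ : Type) [AddCommGroup A₀] :
    IsogenousQuotient A₀ ⥤ AdelicLattice A₀ where
  obj X := ⟨LambdaObj A₀ X, LambdaObj_ge A₀ X, LambdaObj_finite A₀ X⟩
  map {X Y} f := homOfLE (by
    show LambdaObj A₀ X ≤ LambdaObj A₀ Y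
    intro v hv
    rw [mem_LambdaObj] at hv ⊢
    rw [← f.2, AddMonoidHom.comp_apply, hv, map_zero])
  map_id _ := Subsingleton.elim _ _
  map_comp _ _ := Subsingleton.elim _ _

/-- Let `A₀` be a divisible abelian group with finite `n`-torsion for all
`n ≥ 1`. Then: (i) for every surjection `φ : A₀ → B` with finite kernel the induced map
`V̂φ : V̂A₀ → V̂B` is an isomorphism and `Λφ := (V̂φ)⁻¹(T̂B)` contains `T̂A₀` with finite
quotient; (ii) `(B, φ) ↦ Λφ` is a functor from the category of such surjections to the
category of lattices in `V̂A₀` (with inclusions as morphisms); (iii) this functor is an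
equivalence of categories. -/
theorem lambda_functor_equivalence (A₀ : Type) [AddCommGroup A₀]
    (hdiv : ∀ (a : A₀) (n : ℕ), 0 < n → ∃ b : A₀, n • b = a)
    (hfin : ∀ n : ℕ, 0 < n → Finite (torsionSub n A₀)) :
    (∀ X : IsogenousQuotient A₀,
      Function.Bijective
        (LinearMap.rTensor (R := ℤ) ℚ (adelicMap X.hom).toIntLinearMap) ∧
      (tmulQ (M := AdelicTate A₀) 1).range ≤ LambdaObj A₀ X ∧
      Finite ((LambdaObj A₀ X) ⧸
        ((tmulQ (M := AdelicTate A₀) 1).range.addSubgroupOf (LambdaObj A₀ X)))) ∧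
    ∃ F : IsogenousQuotient A₀ ⥤ AdelicLattice A₀,
      (∀ X : IsogenousQuotient A₀, (F.obj X).1 = LambdaObj A₀ X) ∧ F.IsEquivalence := by
  refine ⟨fun X => ⟨Vmap_bijective X.hom X.surjective X.finiteKernel, LambdaObj_ge A₀ X,
    LambdaObj_finite A₀ X⟩, LambdaFunctor A₀, fun X => rfl, ?_⟩
  refine { faithful := ⟨?_⟩, full := ⟨?_⟩, essSurj := ⟨?_⟩ }
  · intro X Y f g _
    apply Subtype.ext
    ext b
    obtain ⟨a, rfl⟩ := X.surjective b
    exact (DFunLike.congr_fun f.2 a).trans (DFunLike.congr_fun g.2 a).symm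
  · intro X Y h
    have hle : LambdaObj A₀ X ≤ LambdaObj A₀ Y := leOfHom h
    have hker : X.hom.ker ≤ Y.hom.ker := by
      intro a ha
      obtain ⟨N, hN, hk⟩ := ker_torsion X.hom X.finiteKernel
      obtain ⟨v, rfl⟩ := tateEval_surj hdiv a N hN (hk a ha)
      exact (mem_LambdaObj A₀ Y v).1 (hle ((mem_LambdaObj A₀ X v).2 ha))
    choose s hs using X.surjective
    refine ⟨⟨X.hom.liftOfRightInverse s hs ⟨Y.hom, hker⟩,
      X.hom.liftOfRightInverse_comp s hs ⟨Y.hom, hker⟩⟩, Subsingleton.elim _ _⟩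
  · intro L
    have hK := map_eval_finite A₀ L
    let K := L.1.map (tateEval A₀)
    let X : IsogenousQuotient A₀ :=
      { carrier := A₀ ⧸ K
        hom := QuotientAddGroup.mk' K
        surjective := QuotientAddGroup.mk'_surjective K
        finiteKernel := by rw [QuotientAddGroup.ker_mk']; exact hK }
    refine ⟨X, ⟨eqToIso (Subtype.ext ?_)⟩⟩
    show LambdaObj A₀ X = L.1
    ext v
    rw [mem_LambdaObj]
    show (QuotientAddGroup.mk' K) (tateEval A₀ v) = 0 ↔ _
    rw [← AddMonoidHom.mem_ker, QuotientAddGroup.ker_mk']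
    constructor
    · rintro ⟨w, hw, hwv⟩
      have hmem : v - w ∈ (tateEval A₀).ker := by
        rw [AddMonoidHom.mem_ker, map_sub, hwv, sub_self]
      rw [tateEval_ker] at hmem
      have := L.1.add_mem (L.2.1 hmem) hw
      rwa [sub_add_cancel] at this
    · intro hv
      exact ⟨v, hv, rfl⟩
end
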